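/- arXiv:1307.3431 — 3 statements merged into one kernel-verified Lean document; each statement's English description precedes it below -/
import Mathlib

section
/- Let (R,𝔪) be an analytically unramified Cohen–Macaulay local ring of dimension 2 and let I, J be 𝔪-primary ideals of R. Then the heights of the ideals (u₁, R̄'₁⁺) and (u₂, R̄'₂⁺) of the bigraded extended Rees ring R̄' = R̄'(I,J) are both equal to 2. -/
/-!
# The height of `(u₁, \overline{𝓡'}₁⁺)` in the bigraded extended Rees ring

Write `𝓡' = ⊕ I^r J^s t₁^r t₂^s` and `\overline{𝓡'}` for its integral closure in
`R[t₁^{±1}, t₂^{±1}]`. Exchanging the two variables (`swapEquiv`) reduces the theorem to the ideal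
`(u₁, \overline{𝓡'}₁⁺)`.

*Lower bound* (`two_le_height`). Let `P` be a prime containing `u₁` and `\overline{𝓡'}₁⁺`. The
elements all of whose homogeneous components lie in `P` after the substitution `t₁ = 1` form a
prime `N` (`exists_prime_zero_contraction`). Since a component of degree `(r, s)` with `r ≤ 0` is
`u₁^(-r)` times its specialization, and those with `r ≥ 1` are in `P` by assumption, `N ⊆ P`; the
inclusion is strict because `u₁` specializes to `1`. The ideal `I` contains a nonzerodivisor `x` of
`R`, and `x = u₁ (x t₁) ∈ P` gives `x ∈ N`, so `N` is not a minimal prime. Hence `ht P ≥ 2`.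

*Upper bound*. As `\overline{𝓡'}` need not be known to be Noetherian, the argument takes place in
`𝓡'`, which is Noetherian of dimension at most `dim R + 2 = 4` (`extRees_dim`). Let `L` be the ideal
of `𝓡'` with components `I^r J^s` for `r ≠ 0` and `I J^s` for `r = 0` (`fstIdeal`). Then `𝓡' ⧸ L` is
the quotient of the extended Rees ring `D = ⊕ J^s t₂^s` by an ideal contained in the radical of
`u₂ D`, because `I ⊆ √J`. Since `D` has a prime of height at least three containing `u₂`, the
quotient `D ⧸ u₂ D`, and therefore `𝓡' ⧸ L`, has dimension at least two. So some prime `Q ⊇ L` has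
coheight at least two, hence height at most `4 - 2 = 2`. A prime `P` of `\overline{𝓡'}` lying over
`Q` has height at most `ht Q` by incomparability, and it contains `u₁` and `\overline{𝓡'}₁⁺`: the
homogeneous integral equation of an element of degree `(r, s)`, `r ≥ 1`, has its coefficients in `L`
(`mono_mem_of_fstIdeal_le`).
-/


/-! ### Basic notions: integral closure of ideals, analytic unramifiedness,
lengths, regular sequences, Cohen-Macaulayness, primary ideals -/

/-- `x` is integral over the ideal `I`: it satisfies an equation
`x^n + a₁ x^(n-1) + ⋯ + aₙ = 0` with `aᵢ ∈ Iⁱ`. -/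
def IsIntegralOverIdeal {R : Type*} [CommRing R] (I : Ideal R) (x : R) : Prop :=
  ∃ n : ℕ, 0 < n ∧ ∃ c : ℕ → R, (∀ i, c i ∈ I ^ i) ∧
    x ^ n + ∑ i ∈ Finset.range n, c (i + 1) * x ^ (n - (i + 1)) = 0

/-- The integral closure `\overline{I}` of an ideal `I` (the set of elements integral
over `I` is an ideal, so it coincides with the ideal it spans). -/
noncomputable def intCl {R : Type*} [CommRing R] (I : Ideal R) : Ideal R :=
  Ideal.span {x | IsIntegralOverIdeal I x}

/-- A local ring is analytically unramified if its `𝔪`-adic completion is reduced. -/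
def AnalyticallyUnramified (R : Type*) [CommRing R] [IsLocalRing R] : Prop :=
  IsReduced (AdicCompletion (IsLocalRing.maximalIdeal R) R)

/-- The length `λ(M)` of a module, as the Krull dimension of its lattice of submodules. -/
noncomputable def moduleLength (R M : Type*) [Ring R] [AddCommGroup M] [Module R M] :
    WithBot ℕ∞ :=
  Order.krullDim (Submodule R M)

/-- `f` is a regular sequence on the module `M`. -/
def IsRegularSeq {R : Type*} (M : Type*) [CommRing R] [AddCommGroup M] [Module R M]
    {n : ℕ} (f : Fin n → R) : Prop :=
  (∀ i : Fin n, ∀ z : M,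
      f i • z ∈ Ideal.span (f '' {j | j < i}) • (⊤ : Submodule R M) →
      z ∈ Ideal.span (f '' {j | j < i}) • (⊤ : Submodule R M)) ∧
  Ideal.span (Set.range f) • (⊤ : Submodule R M) ≠ ⊤

/-- A local ring is Cohen-Macaulay if there is a regular sequence of length
`dim` inside the maximal ideal. -/
def IsCMLocalRing (A : Type*) [CommRing A] [IsLocalRing A] : Prop :=
  ∃ (n : ℕ) (f : Fin n → A), (∀ i, f i ∈ IsLocalRing.maximalIdeal A) ∧
    IsRegularSeq A f ∧ (n : WithBot ℕ∞) = ringKrullDim A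

/-- A commutative ring is Cohen-Macaulay if all its localizations at primes are. -/
def IsCMRing (A : Type*) [CommRing A] : Prop :=
  ∀ (P : Ideal A) (_ : P.IsPrime), IsCMLocalRing (Localization.AtPrime P)

/-- An ideal of a local ring is `𝔪`-primary if its radical is the maximal ideal. -/
def IsMPrimary {R : Type*} [CommRing R] [IsLocalRing R] (I : Ideal R) : Prop :=
  I.radical = IsLocalRing.maximalIdeal R

/-- `I^r J^s` for `r s : ℤ`, with the convention that nonpositive powers give the
unit ideal. -/
noncomputable def IJ {R : Type*} [CommRing R] (I J : Ideal R) (r s : ℤ) : Ideal R :=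
  I ^ r.toNat * J ^ s.toNat

/-- `\overline{I^r J^s}` for `r s : ℤ`. -/
noncomputable def IJbar {R : Type*} [CommRing R] (I J : Ideal R) (r s : ℤ) : Ideal R :=
  intCl (IJ I J r s)

/-- A good joint reduction `(a,b)` of the filtration `{\overline{I^r J^s}}`:
a joint reduction such that moreover `(a) ∩ \overline{I^r J^s} = a ⬝ \overline{I^{r-1} J^s}`
for all `s` and all `r > 0`, and symmetrically for `b`. -/
def IsGoodJointReduction {R : Type*} [CommRing R] (I J : Ideal R) (a b : R) : Prop :=
  a ∈ I ∧ b ∈ J ∧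
  (∃ N : ℤ, ∀ r s : ℤ, N ≤ r → N ≤ s →
      IJbar I J r s =
        Ideal.span {a} * IJbar I J (r - 1) s ⊔ Ideal.span {b} * IJbar I J r (s - 1)) ∧
  (∀ r s : ℤ, 0 < r →
      Ideal.span {a} ⊓ IJbar I J r s = Ideal.span {a} * IJbar I J (r - 1) s) ∧
  (∀ r s : ℤ, 0 < s →
      Ideal.span {b} ⊓ IJbar I J r s = Ideal.span {b} * IJbar I J r (s - 1))
/-! ### The bigraded extended Rees ring of the filtration `{\overline{I^r J^s}}` -/

/-- The Laurent polynomial ring `R[t₁,t₂,t₁⁻¹,t₂⁻¹]` in two variables over `R`. -/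
abbrev Amb (R : Type*) [CommRing R] := AddMonoidAlgebra R (ℤ × ℤ)

/-- The monomial `c t₁^r t₂^s`. -/
noncomputable def mono {R : Type*} [CommRing R] (r s : ℤ) (c : R) : Amb R :=
  AddMonoidAlgebra.single (r, s) c

/-- Generators of the extended bigraded Rees ring: `I t₁`, `J t₂`, `u₁ = t₁⁻¹` and
`u₂ = t₂⁻¹`. -/
def extReesGens {R : Type*} [CommRing R] (I J : Ideal R) : Set (Amb R) :=
  {x | ∃ a ∈ I, x = mono 1 0 a} ∪ {x | ∃ b ∈ J, x = mono 0 1 b} ∪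
    {mono (-1) 0 1, mono 0 (-1) 1}

/-- The extended bigraded Rees ring `𝓡'(I,J) = ⊕_{r,s ∈ ℤ} I^r J^s t₁^r t₂^s`. -/
noncomputable def extRees {R : Type*} [CommRing R] (I J : Ideal R) : Subalgebra R (Amb R) :=
  Algebra.adjoin R (extReesGens I J)

/-- The extended bigraded Rees ring `\overline{𝓡'}(I,J) = ⊕_{r,s ∈ ℤ}
\overline{I^r J^s} t₁^r t₂^s` of the filtration of integral closures; by the theorem on
integral closures of graded rings it is the integral closure of `𝓡'(I,J)` in
`R[t₁,t₂,t₁⁻¹,t₂⁻¹]`. -/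
noncomputable def extReesBar {R : Type*} [CommRing R] (I J : Ideal R) :
    Subalgebra R (Amb R) :=
  (integralClosure (extRees I J) (Amb R)).restrictScalars R

lemma mem_extReesBar_of_mem_extRees {R : Type*} [CommRing R] {I J : Ideal R} {x : Amb R}
    (hx : x ∈ extRees I J) : x ∈ extReesBar I J := by
  have : IsIntegral (extRees I J) x := by
    have := isIntegral_algebraMap (R := ↥(extRees I J)) (A := Amb R) (x := ⟨x, hx⟩)
    simpa using this
  exact this

/-- `u₁ = t₁⁻¹` belongs to the extended Rees ring. -/
lemma u1_mem {R : Type*} [CommRing R] (I J : Ideal R) :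
    mono (-1) 0 (1 : R) ∈ extReesBar I J :=
  mem_extReesBar_of_mem_extRees <| Algebra.subset_adjoin <| Or.inr <| Or.inl rfl

/-- `u₂ = t₂⁻¹` belongs to the extended Rees ring. -/
lemma u2_mem {R : Type*} [CommRing R] (I J : Ideal R) :
    mono 0 (-1) (1 : R) ∈ extReesBar I J :=
  mem_extReesBar_of_mem_extRees <| Algebra.subset_adjoin <| Or.inr <| Or.inr rfl

/-- the height of an ideal: the infimum of the heights of primes containing it. -/
noncomputable def idealHeight {A : Type*} [CommRing A] (K : Ideal A) : ℕ∞ :=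
  sInf {h | ∃ P : PrimeSpectrum A, K ≤ P.asIdeal ∧ h = Order.height P}

/-- For a bigraded subring `B` of `R[t₁^{±1}, t₂^{±1}]`, the ideal `B₁⁺` generated by all
homogeneous elements of degree `(r,s)` with `r ≥ 1`. -/
noncomputable def plusIdeal1 {R : Type*} [CommRing R] (S : Subalgebra R (Amb R)) :
    Ideal ↥S :=
  Ideal.span {x : ↥S | ∃ r s : ℤ, 1 ≤ r ∧ ∃ c : R, (x : Amb R) = mono r s c}

/-- For a bigraded subring `B` of `R[t₁^{±1}, t₂^{±1}]`, the ideal `B₂⁺` generated by all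
homogeneous elements of degree `(r,s)` with `s ≥ 1`. -/
noncomputable def plusIdeal2 {R : Type*} [CommRing R] (S : Subalgebra R (Amb R)) :
    Ideal ↥S :=
  Ideal.span {x : ↥S | ∃ r s : ℤ, 1 ≤ s ∧ ∃ c : R, (x : Amb R) = mono r s c}

/-! ### Integrality of coefficients of Laurent polynomials -/

section

open LaurentPolynomial Polynomial

attribute [local instance] Polynomial.algebra

/-- The coefficients of a Laurent polynomial over `S` integral over `A[T;T⁻¹]` are integral over
`A`. After clearing denominators by a power of `T` this is the corresponding fact for ordinary
polynomials. -/
lemma isIntegral_laurent_coeff {A S : Type*} [CommRing A] [CommRing S] [Algebra A S]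
    (f : S[T;T⁻¹])
    (hf : (AddMonoidAlgebra.mapRingHom ℤ (algebraMap A S)).IsIntegralElem f) (n : ℤ) :
    IsIntegral A (f.coeff n) := by
  let φ : A[T;T⁻¹] →+* S[T;T⁻¹] := AddMonoidAlgebra.mapRingHom ℤ (algebraMap A S)
  let _ : Algebra A[T;T⁻¹] S[T;T⁻¹] := φ.toAlgebra
  let _ : Algebra A[X] S[T;T⁻¹] := (φ.comp Polynomial.toLaurent).toAlgebra
  have _ : IsScalarTower A[X] A[T;T⁻¹] S[T;T⁻¹] := IsScalarTower.of_algebraMap_eq fun _ => rfl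
  have hcomp : φ.comp Polynomial.toLaurent =
      Polynomial.toLaurent.comp (Polynomial.mapRingHom (algebraMap A S)) := by
    ext x a <;> simp [φ]
    split_ifs <;> simp
  obtain ⟨⟨_, N, rfl⟩, hN⟩ := IsIntegral.exists_multiple_integral_of_isLocalization
    (Submonoid.powers (X : A[X])) (Rₘ := A[T;T⁻¹]) f hf
  obtain ⟨k, f', hf'⟩ := f.exists_T_pow
  have hX : algebraMap A[X] S[T;T⁻¹] X = T 1 := by
    change (φ.comp Polynomial.toLaurent) X = _
    rw [hcomp]; simp
  have h1 : IsIntegral A[X] (Polynomial.toLaurent (X ^ N * f')) := by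
    have : Polynomial.toLaurent (X ^ N * f') = algebraMap A[X] S[T;T⁻¹] (X ^ k) *
        ((⟨X ^ N, N, rfl⟩ : Submonoid.powers (X : A[X])) • f) := by
      rw [Submonoid.smul_def, Algebra.smul_def]
      simp only [map_mul, hf', map_pow, hX, Polynomial.toLaurent_X, T_pow, mul_one]
      rw [mul_comm (T k : S[T;T⁻¹]), mul_comm (T N : S[T;T⁻¹]) f, mul_assoc, mul_left_comm]
    rw [this]
    exact isIntegral_algebraMap.mul hN
  have h2 : IsIntegral A[X] (X ^ N * f') := by
    obtain ⟨p, hp, h⟩ := h1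
    refine ⟨p, hp, Polynomial.toLaurent_injective ?_⟩
    rw [map_zero, Polynomial.hom_eval₂]
    rw [← h]
    congr 1
    exact hcomp.symm
  have h3 (j : ℕ) : IsIntegral A (f'.coeff j) := by
    have := IsIntegral.coeff h2 (j + N)
    rwa [mul_comm, Polynomial.coeff_mul_X_pow] at this
  have h4 : f.coeff n = (Polynomial.toLaurent f').coeff (n + k) := by
    rw [hf']
    simp only [T, AddMonoidAlgebra.coeff_mul_single_apply]
    simp
  rw [h4]
  by_cases h : 0 ≤ n + k
  · obtain ⟨m, hm⟩ := Int.eq_ofNat_of_zero_le h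
    rw [hm, coeff_toLaurent]
    have := h3 m
    convert this using 1
    exact Finsupp.mapDomain_apply Nat.castEmbedding.injective _ _
  · rw [coeff_toLaurent, Finsupp.mapDomain_of_notMem_range]
    · exact isIntegral_zero
    · rintro ⟨m, hm⟩
      apply h
      rw [← hm]
      simp

end

/-! ### Homogeneous components of the extended Rees ring -/

lemma mono_mul_mono {R : Type*} [CommRing R] (r s r' s' : ℤ) (c c' : R) :
    mono r s c * mono r' s' c' = mono (r + r') (s + s') (c * c') :=
  AddMonoidAlgebra.single_mul_single ..

lemma mono_pow {R : Type*} [CommRing R] (r s : ℤ) (c : R) (n : ℕ) :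
    mono r s c ^ n = mono (n * r) (n * s) (c ^ n) := by
  simp [mono, AddMonoidAlgebra.single_pow]

lemma coeff_mono {R : Type*} [CommRing R] (r s r' s' : ℤ) (c : R) :
    (mono r s c).coeff (r', s') = if r = r' ∧ s = s' then c else 0 := by
  simp [mono, AddMonoidAlgebra.coeff_single, Finsupp.single_apply]

lemma IJ_mul_le {R : Type*} [CommRing R] (I J : Ideal R) (r s r' s' : ℤ) :
    IJ I J r s * IJ I J r' s' ≤ IJ I J (r + r') (s + s') := by
  unfold IJ
  rw [mul_mul_mul_comm, ← pow_add, ← pow_add]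
  exact Ideal.mul_mono (Ideal.pow_le_pow_right (by omega)) (Ideal.pow_le_pow_right (by omega))

/-- The bigraded subring `⊕ I^r J^s t₁^r t₂^s`, described by coefficients. -/
noncomputable def coeffSubalgebra {R : Type*} [CommRing R] (I J : Ideal R) :
    Subalgebra R (Amb R) where
  carrier := {z | ∀ r s, z.coeff (r, s) ∈ IJ I J r s}
  zero_mem' r s := by simp
  one_mem' r s := by
    rw [show (1 : Amb R) = mono 0 0 1 from rfl, coeff_mono]
    split_ifs with h
    · obtain ⟨rfl, rfl⟩ := h; simp [IJ]
    · simp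
  add_mem' ha hb r s := by
    simpa using add_mem (ha r s) (hb r s)
  mul_mem' {a b} ha hb r s := by
    classical
    rw [AddMonoidAlgebra.coeff_mul]
    refine sum_mem fun g _ => sum_mem fun h _ => ?_
    dsimp only
    split_ifs with hgh
    · have := IJ_mul_le I J g.1 g.2 h.1 h.2 (Ideal.mul_mem_mul (ha g.1 g.2) (hb h.1 h.2))
      have h1 : g.1 + h.1 = r := congrArg Prod.fst hgh
      have h2 : g.2 + h.2 = s := congrArg Prod.snd hgh
      rwa [h1, h2] at this
    · simp
  algebraMap_mem' c r s := by
    rw [show (algebraMap R (Amb R) c) = mono 0 0 c from rfl, coeff_mono]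
    split_ifs with h
    · obtain ⟨rfl, rfl⟩ := h; simp [IJ]
    · simp

lemma u1_mem_extRees {R : Type*} [CommRing R] (I J : Ideal R) :
    mono (-1) 0 (1 : R) ∈ extRees I J :=
  Algebra.subset_adjoin <| Or.inr <| Or.inl rfl

lemma u2_mem_extRees {R : Type*} [CommRing R] (I J : Ideal R) :
    mono 0 (-1) (1 : R) ∈ extRees I J :=
  Algebra.subset_adjoin <| Or.inr <| Or.inr rfl

lemma mono_fst_mem_extRees {R : Type*} [CommRing R] (I J : Ideal R) (n : ℕ) :
    ∀ c ∈ I ^ n, mono n 0 c ∈ extRees I J := by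
  induction n with
  | zero => exact fun c _ => (extRees I J).algebraMap_mem c
  | succ n ih =>
    intro c hc
    rw [pow_succ] at hc
    induction hc using Submodule.mul_induction_on' with
    | mem_mul_mem a ha b hb =>
      have := mul_mem (ih a ha) (Algebra.subset_adjoin (Or.inl (Or.inl ⟨b, hb, rfl⟩)) :
        mono 1 0 b ∈ extRees I J)
      rw [mono_mul_mono] at this
      exact_mod_cast this
    | add x _ y _ hx hy =>
      rw [show mono (↑(n + 1)) 0 (x + y) = mono (↑(n + 1)) 0 x + mono (↑(n + 1)) 0 y from
        AddMonoidAlgebra.single_add ..]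
      exact add_mem hx hy

lemma mono_snd_mem_extRees {R : Type*} [CommRing R] (I J : Ideal R) (n : ℕ) :
    ∀ c ∈ J ^ n, mono 0 n c ∈ extRees I J := by
  induction n with
  | zero => exact fun c _ => (extRees I J).algebraMap_mem c
  | succ n ih =>
    intro c hc
    rw [pow_succ] at hc
    induction hc using Submodule.mul_induction_on' with
    | mem_mul_mem a ha b hb =>
      have := mul_mem (ih a ha) (Algebra.subset_adjoin (Or.inl (Or.inr ⟨b, hb, rfl⟩)) :
        mono 0 1 b ∈ extRees I J)
      rw [mono_mul_mono] at this
      exact_mod_cast this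
    | add x _ y _ hx hy =>
      rw [show mono 0 (↑(n + 1)) (x + y) = mono 0 (↑(n + 1)) x + mono 0 (↑(n + 1)) y from
        AddMonoidAlgebra.single_add ..]
      exact add_mem hx hy

/-- Together with `mem_extRees_iff`, this identifies the ring generated by `I t₁`, `J t₂`, `u₁`, `u₂`
with `⊕ I^r J^s t₁^r t₂^s`. -/
lemma mono_mem_extRees {R : Type*} [CommRing R] {I J : Ideal R} {r s : ℤ} {c : R}
    (hc : c ∈ IJ I J r s) : mono r s c ∈ extRees I J := by
  have h1 (a : R) (ha : a ∈ I ^ r.toNat) : mono r 0 a ∈ extRees I J := by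
    have := mul_mem (mono_fst_mem_extRees I J _ a ha)
      (pow_mem (u1_mem_extRees I J) (-r).toNat)
    rw [mono_pow, mono_mul_mono] at this
    convert this using 2 <;> simp <;> omega
  have h2 (a : R) (ha : a ∈ J ^ s.toNat) : mono 0 s a ∈ extRees I J := by
    have := mul_mem (mono_snd_mem_extRees I J _ a ha)
      (pow_mem (u2_mem_extRees I J) (-s).toNat)
    rw [mono_pow, mono_mul_mono] at this
    convert this using 2 <;> simp <;> omega
  unfold IJ at hc
  induction hc using Submodule.mul_induction_on' with
  | mem_mul_mem a ha b hb =>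
    have := mul_mem (h1 a ha) (h2 b hb)
    rw [mono_mul_mono] at this
    simpa using this
  | add x _ y _ hx hy =>
    rw [show mono r s (x + y) = mono r s x + mono r s y from AddMonoidAlgebra.single_add ..]
    exact add_mem hx hy

lemma mem_of_mono_coeff_mem {R : Type*} [CommRing R] {σ : Type*} [SetLike σ (Amb R)]
    [AddSubmonoidClass σ (Amb R)] (S : σ) (z : Amb R)
    (h : ∀ r s, mono r s (z.coeff (r, s)) ∈ S) : z ∈ S := by
  rw [← AddMonoidAlgebra.sum_coeff_single z]
  exact sum_mem fun g _ => h g.1 g.2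

lemma mem_extRees_iff {R : Type*} [CommRing R] {I J : Ideal R} {z : Amb R} :
    z ∈ extRees I J ↔ ∀ r s, z.coeff (r, s) ∈ IJ I J r s := by
  refine ⟨fun hz => ?_, fun h => mem_of_mono_coeff_mem _ z fun r s => mono_mem_extRees (h r s)⟩
  suffices extRees I J ≤ coeffSubalgebra I J from this hz
  refine Algebra.adjoin_le ?_
  rintro _ ((⟨a, ha, rfl⟩ | ⟨b, hb, rfl⟩) | rfl | rfl) <;> intro r s <;> rw [coeff_mono] <;>
    split_ifs with h <;> try simp only [zero_mem]
  all_goals obtain ⟨rfl, rfl⟩ := h; simp_all [IJ]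

/-! ### The grading of the integral closure -/

/-- The algebra homomorphism `c t^g ↦ (c t^(π g)) T^(w g)`, where `T` records the weight `w g`.
With `π = id` it is the coaction defining the grading of `R[t₁^{±1}, t₂^{±1}]` by `w`. -/
noncomputable def coact {R H : Type*} [CommRing R] [AddCommMonoid H] (w : ℤ × ℤ →+ H)
    (π : ℤ × ℤ →+ ℤ × ℤ) : Amb R →ₐ[R] AddMonoidAlgebra (Amb R) H :=
  AddMonoidAlgebra.lift R _ _
    { toFun g := AddMonoidAlgebra.single (w g.toAdd) (AddMonoidAlgebra.single (π g.toAdd) (1 : R))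
      map_one' := by simp [AddMonoidAlgebra.one_def]
      map_mul' g h := by simp [AddMonoidAlgebra.single_mul_single] }

lemma coact_single {R H : Type*} [CommRing R] [AddCommMonoid H] (w : ℤ × ℤ →+ H)
    (π : ℤ × ℤ →+ ℤ × ℤ) (g : ℤ × ℤ) (c : R) :
    coact w π (AddMonoidAlgebra.single g c) =
      AddMonoidAlgebra.single (w g) (AddMonoidAlgebra.single (π g) c) := by
  simp [coact, AddMonoidAlgebra.lift_single, AddMonoidAlgebra.smul_single]

lemma coact_mem_range {R H : Type*} [CommRing R] [AddCommMonoid H] (w : ℤ × ℤ →+ H)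
    (I J : Ideal R) {z : Amb R} (hz : z ∈ extRees I J) :
    coact w (.id _) z ∈ Set.range
      (AddMonoidAlgebra.mapRingHom H (algebraMap (extRees I J) (Amb R))) := by
  suffices extRees I J ≤
      (AddMonoidAlgebra.mapAlgHom H (extRees I J).val).range.comap (coact w (.id _)) from this hz
  refine Algebra.adjoin_le fun x hx => ?_
  obtain ⟨g, c, rfl⟩ : ∃ g c, x = AddMonoidAlgebra.single g c := by
    rcases hx with ((⟨a, ha, rfl⟩ | ⟨b, hb, rfl⟩) | rfl | rfl) <;> exact ⟨_, _, rfl⟩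
  refine ⟨AddMonoidAlgebra.single (w g) ⟨_, Algebra.subset_adjoin hx⟩, ?_⟩
  refine Eq.trans ?_ (coact_single w (.id _) g c).symm
  exact AddMonoidAlgebra.mapAlgHom_single ..

/-- The integral closure of `𝓡'` is graded: it contains the `w`-homogeneous components of its
elements. Applying the coaction to an integral equation of `z` shows that the image of `z` is
integral over the Laurent polynomial ring over `𝓡'`, so its coefficients are integral over `𝓡'`. -/
lemma coact_coeff_mem_extReesBar {R : Type*} [CommRing R] (w : ℤ × ℤ →+ ℤ)
    (I J : Ideal R) {z : Amb R} (hz : z ∈ extReesBar I J) (n : ℤ) :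
    (coact w (.id _) z).coeff n ∈ extReesBar I J := by
  obtain ⟨p, hp, h⟩ := hz
  refine isIntegral_laurent_coeff (A := extRees I J) _ ?_ n
  let κ : extRees I J →+* AddMonoidAlgebra (Amb R) ℤ :=
    (coact w (.id _)).toRingHom.comp (algebraMap (extRees I J) (Amb R))
  have hl : p.map κ ∈ Polynomial.lifts
      (AddMonoidAlgebra.mapRingHom ℤ (algebraMap (extRees I J) (Amb R))) := by
    rw [Polynomial.lifts_iff_coeff_lifts]
    intro i
    rw [Polynomial.coeff_map]
    exact coact_mem_range w I J (p.coeff i).2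
  obtain ⟨q, hq, -, hqm⟩ := Polynomial.lifts_and_natDegree_eq_and_monic hl (hp.map κ)
  refine ⟨q, hqm, ?_⟩
  rw [← Polynomial.eval_map, hq, Polynomial.eval_map]
  have := congrArg (coact w (.id _)) h
  rw [map_zero] at this
  rw [← this]
  exact (Polynomial.hom_eval₂ p _ (coact w (.id _)).toRingHom z).symm

lemma coact_id_coeff_coeff {R H : Type*} [CommRing R] [AddCommMonoid H] [DecidableEq H]
    (w : ℤ × ℤ →+ H) (z : Amb R) (n : H) (g : ℤ × ℤ) :
    ((coact w (.id _) z).coeff n).coeff g = if w g = n then z.coeff g else 0 := by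
  induction z using AddMonoidAlgebra.induction_linear with
  | zero => simp
  | add x y hx hy => 
    simp only [map_add, AddMonoidAlgebra.coeff_add, Finsupp.add_apply, hx, hy]
    split_ifs <;> simp
  | single h c =>
    rw [coact_single]
    simp only [AddMonoidAlgebra.coeff_single, Finsupp.single_apply, AddMonoidHom.id_apply]
    by_cases hg : h = g
    · subst hg; by_cases hn : w h = n <;> simp [hn]
    · split_ifs <;> simp [hg]

lemma mono_coeff_mem_extReesBar {R : Type*} [CommRing R] {I J : Ideal R} {z : Amb R}
    (hz : z ∈ extReesBar I J) (r s : ℤ) : mono r s (z.coeff (r, s)) ∈ extReesBar I J := by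
  convert coact_coeff_mem_extReesBar (AddMonoidHom.snd ℤ ℤ) I J
    (coact_coeff_mem_extReesBar (AddMonoidHom.fst ℤ ℤ) I J hz r) s using 1
  ext ⟨a, b⟩
  rw [coeff_mono, coact_id_coeff_coeff, coact_id_coeff_coeff]
  by_cases h1 : a = r <;> by_cases h2 : b = s <;>
    simp [h1, h2, eq_comm (a := r), eq_comm (a := s)]

/-- The substitution `t₁ ↦ 1`. -/
noncomputable def specOne (R : Type*) [CommRing R] : Amb R →ₐ[R] Amb R :=
  AddMonoidAlgebra.mapDomainAlgHom R R ((AddMonoidHom.inr ℤ ℤ).comp (AddMonoidHom.snd ℤ ℤ))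

lemma specOne_mono {R : Type*} [CommRing R] (r s : ℤ) (c : R) :
    specOne R (mono r s c) = mono 0 s c := by
  exact AddMonoidAlgebra.mapDomain_single ..

lemma specOne_mem_extRees {R : Type*} [CommRing R] {I J : Ideal R} {z : Amb R}
    (hz : z ∈ extRees I J) : specOne R z ∈ extRees I J := by
  suffices extRees I J ≤ (extRees I J).comap (specOne R) from this hz
  refine Algebra.adjoin_le ?_
  rintro _ ((⟨a, ha, rfl⟩ | ⟨b, hb, rfl⟩) | rfl | rfl) <;>
    simp only [Subalgebra.coe_comap, Set.mem_preimage, specOne_mono, SetLike.mem_coe]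
  · exact (extRees I J).algebraMap_mem a
  · exact Algebra.subset_adjoin (Or.inl (Or.inr ⟨b, hb, rfl⟩))
  · exact (extRees I J).one_mem
  · exact u2_mem_extRees I J

lemma specOne_mem_extReesBar {R : Type*} [CommRing R] {I J : Ideal R} {z : Amb R}
    (hz : z ∈ extReesBar I J) : specOne R z ∈ extReesBar I J := by
  let κ : extRees I J →+* extRees I J :=
    (((specOne R).comp (extRees I J).val).codRestrict (extRees I J)
      fun x => specOne_mem_extRees x.2).toRingHom
  obtain ⟨p, hp, h⟩ := hz
  refine ⟨p.map κ, hp.map κ, ?_⟩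
  rw [Polynomial.eval₂_map]
  have := congrArg (specOne R) h
  rw [map_zero] at this
  rw [← this]
  exact (Polynomial.hom_eval₂ p _ (specOne R).toRingHom z).symm

lemma mono_zero_coeff_mem_extReesBar {R : Type*} [CommRing R] {I J : Ideal R} {z : Amb R}
    (hz : z ∈ extReesBar I J) (r s : ℤ) : mono 0 s (z.coeff (r, s)) ∈ extReesBar I J := by
  have := specOne_mem_extReesBar (mono_coeff_mem_extReesBar hz r s)
  rwa [specOne_mono] at this

/-! ### The lower bound -/

lemma exists_regular_mem {R : Type*} [CommRing R] [IsLocalRing R] (hCM : IsCMLocalRing R)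
    (hdim : ringKrullDim R = 2) (I : Ideal R) (hI : IsMPrimary I) :
    ∃ x ∈ I, x ∈ nonZeroDivisors R := by
  obtain ⟨n, f, hf, ⟨hreg, -⟩, hn⟩ := hCM
  rw [hdim] at hn
  obtain rfl : n = 2 := by exact_mod_cast hn
  have h0 : f 0 ∈ nonZeroDivisors R := by
    rw [mem_nonZeroDivisors_iff_right]
    intro z hz
    have := hreg 0 z
    simpa [mul_comm, hz] using this
  have h1 := hf 0
  rw [← hI] at h1
  obtain ⟨k, hk⟩ := h1
  exact ⟨_, hk, pow_mem h0 k⟩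

lemma coact_id_snd_coeff {R : Type*} [CommRing R] (z : Amb R) (g : ℤ × ℤ) :
    (coact (.id _) ((AddMonoidHom.inr ℤ ℤ).comp (AddMonoidHom.snd ℤ ℤ)) z).coeff g =
      mono 0 g.2 (z.coeff g) := by
  induction z using AddMonoidAlgebra.induction_linear with
  | zero => simp [mono]
  | add x y hx hy => simp [map_add, hx, hy, mono]
  | single h c =>
    rw [coact_single]
    simp only [AddMonoidAlgebra.coeff_single, Finsupp.single_apply, AddMonoidHom.id_apply]
    split_ifs with hg
    · subst hg; rfl
    · simp [mono]

/-- The elements `z` of `\overline{𝓡'}` such that every homogeneous component of `z`, after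
setting `t₁ = 1`, lies in the prime `P` form a prime ideal: it is the kernel of a homomorphism to a
Laurent polynomial ring over the domain `\overline{𝓡'} ⧸ P`. -/
lemma exists_prime_zero_contraction {R : Type*} [CommRing R] (I J : Ideal R)
    (P : Ideal (extReesBar I J)) [P.IsPrime] :
    ∃ N : Ideal (extReesBar I J), N.IsPrime ∧ ∀ z : extReesBar I J, z ∈ N ↔
      ∀ r s : ℤ, (⟨_, mono_zero_coeff_mem_extReesBar z.2 r s⟩ : extReesBar I J) ∈ P := by
  let ι := AddMonoidAlgebra.mapAlgHom (ℤ × ℤ) (extReesBar I J).val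
  have hι : Function.Injective ι :=
    AddMonoidAlgebra.map_injective (f := (extReesBar I J).val.toAddMonoidHom)
      Subtype.val_injective
  let c : Amb R →ₐ[R] AddMonoidAlgebra (Amb R) (ℤ × ℤ) :=
    coact (.id _) ((AddMonoidHom.inr ℤ ℤ).comp (AddMonoidHom.snd ℤ ℤ))
  have hc (z : extReesBar I J) : c z ∈ ι.range := by
    rw [← AddMonoidAlgebra.sum_coeff_single (c z)]
    refine sum_mem fun g _ => ?_
    refine ⟨AddMonoidAlgebra.single g ⟨_, mono_zero_coeff_mem_extReesBar z.2 g.1 g.2⟩, ?_⟩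
    refine (AddMonoidAlgebra.mapAlgHom_single ..).trans ?_
    rw [coact_id_snd_coeff]
    rfl
  let θ : extReesBar I J →+* AddMonoidAlgebra (extReesBar I J ⧸ P) (ℤ × ℤ) :=
    (AddMonoidAlgebra.mapRingHom (ℤ × ℤ) (Ideal.Quotient.mk P)).comp
      ((AlgEquiv.ofInjective ι hι).symm.toAlgHom.comp
        ((c.comp (extReesBar I J).val).codRestrict ι.range hc)).toRingHom
  refine ⟨RingHom.ker θ, RingHom.ker_isPrime θ, fun z => ?_⟩
  let y := (AlgEquiv.ofInjective ι hι).symm ⟨c z, hc z⟩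
  have hy : ι y = c z := congrArg Subtype.val
    ((AlgEquiv.ofInjective ι hι).apply_symm_apply ⟨c z, hc z⟩)
  have hy' (r s : ℤ) : y.coeff (r, s) = ⟨_, mono_zero_coeff_mem_extReesBar z.2 r s⟩ := by
    apply Subtype.ext
    have := congrArg (fun w => w.coeff (r, s)) hy
    exact this.trans (coact_id_snd_coeff _ _)
  have hθ : θ z = AddMonoidAlgebra.mapRingHom (ℤ × ℤ) (Ideal.Quotient.mk P) y := rfl
  rw [RingHom.mem_ker, hθ]
  constructor
  · intro h r s
    rw [← hy', ← Ideal.Quotient.eq_zero_iff_mem]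
    exact congrArg (fun w => w.coeff (r, s)) h
  · intro h
    ext ⟨r, s⟩
    have := h r s
    rw [← hy', ← Ideal.Quotient.eq_zero_iff_mem] at this
    exact this

lemma mono_nonZeroDivisor {R : Type*} [CommRing R] {x : R} (hx : x ∈ nonZeroDivisors R) (r s : ℤ) :
    mono r s x ∈ nonZeroDivisors (Amb R) := by
  rw [mem_nonZeroDivisors_iff_right] at hx ⊢
  intro z hz
  ext ⟨a, b⟩
  apply hx
  have := congrArg (fun w => w.coeff (a + r, b + s)) hz
  simpa [mono, AddMonoidAlgebra.coeff_mul_single_apply] using this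

/-- Lower bound: a prime `P ⊇ (u₁, \overline{𝓡'}₁⁺)` properly contains the prime `N` of
`exists_prime_zero_contraction`, as `u₁ ∈ P` but `1 ∉ P`, and `N` is not minimal because it
contains a nonzerodivisor of `I`. -/
lemma two_le_height {R : Type*} [CommRing R] (I J : Ideal R) {x : R} (hxI : x ∈ I)
    (hx : x ∈ nonZeroDivisors R) (P : PrimeSpectrum (extReesBar I J))
    (hP : Ideal.span {(⟨mono (-1) 0 1, u1_mem I J⟩ : ↥(extReesBar I J))} ⊔
        plusIdeal1 (extReesBar I J) ≤ P.asIdeal) : 2 ≤ Order.height P := by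
  obtain ⟨N, hN, hmem⟩ := exists_prime_zero_contraction I J P.asIdeal
  have hu : (⟨mono (-1) 0 1, u1_mem I J⟩ : extReesBar I J) ∈ P.asIdeal :=
    hP (Ideal.mem_sup_left (Ideal.subset_span rfl))
  have hplus (z : extReesBar I J) (r s : ℤ) (c : R) (hr : 1 ≤ r) (hz : (z : Amb R) = mono r s c) :
      z ∈ P.asIdeal := hP (Ideal.mem_sup_right (Ideal.subset_span ⟨r, s, hr, c, hz⟩))
  -- every homogeneous component of an element of `N` is in `P`
  have hNP : N ≤ P.asIdeal := by
    intro z hz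
    rw [hmem] at hz
    have hcomp (r s : ℤ) : (⟨_, mono_coeff_mem_extReesBar z.2 r s⟩ : extReesBar I J) ∈
        P.asIdeal := by
      by_cases hr : 1 ≤ r
      · exact hplus _ r s _ hr rfl
      · have := P.asIdeal.mul_mem_left
          ((⟨mono (-1) 0 1, u1_mem I J⟩ : extReesBar I J) ^ (-r).toNat) (hz r s)
        convert this using 1
        apply Subtype.ext
        simp only [MulMemClass.coe_mul, SubmonoidClass.coe_pow, mono_pow, mono_mul_mono]
        congr 1
        · simp; omega
        · simp
        · simp
    have hzs : z = ∑ g ∈ (z : Amb R).coeff.support,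
        (⟨_, mono_coeff_mem_extReesBar z.2 g.1 g.2⟩ : extReesBar I J) := by
      apply Subtype.ext
      rw [AddSubmonoidClass.coe_finsetSum]
      exact (AddMonoidAlgebra.sum_coeff_single (z : Amb R)).symm
    rw [hzs]
    exact sum_mem fun g _ => hcomp g.1 g.2
  have hlt : (⟨N, hN⟩ : PrimeSpectrum (extReesBar I J)) < P := by
    refine lt_of_le_of_ne hNP fun h => ?_
    have hu' : (⟨mono (-1) 0 1, u1_mem I J⟩ : extReesBar I J) ∈ N := by
      have := hu; rw [← h] at this; exact this
    rw [hmem] at hu'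
    have := hu' (-1) 0
    refine P.isPrime.ne_top ((Ideal.eq_top_iff_one _).2 ?_)
    convert this using 1
    apply Subtype.ext
    simp [coeff_mono]
    rfl
  -- `x` is a nonzerodivisor in `N`
  let x' : extReesBar I J := ⟨mono 0 0 x, (extReesBar I J).algebraMap_mem x⟩
  have hx'P : x' ∈ P.asIdeal := by
    have h1 : mono 1 0 x ∈ extReesBar I J := mem_extReesBar_of_mem_extRees
      (Algebra.subset_adjoin (Or.inl (Or.inl ⟨x, hxI, rfl⟩)))
    have := P.asIdeal.mul_mem_left ⟨mono 1 0 x, h1⟩ hu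
    convert this using 1
    apply Subtype.ext
    simp [x', mono_mul_mono]
  have hx'N : x' ∈ N := by
    rw [hmem]
    intro r s
    by_cases h : 0 = r ∧ 0 = s
    · obtain ⟨rfl, rfl⟩ := h
      convert hx'P using 1
      apply Subtype.ext
      simp [x', coeff_mono]
    · convert P.asIdeal.zero_mem using 1
      apply Subtype.ext
      simp [x', coeff_mono, h]
      simp [mono]
  have hx'reg : x' ∈ nonZeroDivisors (extReesBar I J) := by
    rw [mem_nonZeroDivisors_iff_right]
    intro z hz
    apply Subtype.ext
    exact (mem_nonZeroDivisors_iff_right.1 (mono_nonZeroDivisor hx 0 0)) _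
      (congrArg Subtype.val hz)
  obtain ⟨q, hq, hqN⟩ := Ideal.exists_minimalPrimes_le (I := ⊥) (J := N) bot_le
  have hqlt : (⟨q, hq.1.1⟩ : PrimeSpectrum (extReesBar I J)) < ⟨N, hN⟩ := by
    refine lt_of_le_of_ne hqN fun h => ?_
    have h' : q = N := congrArg PrimeSpectrum.asIdeal h
    subst h'
    exact Set.disjoint_left.1 (Ideal.disjoint_nonZeroDivisors_of_mem_minimalPrimes hq) hx'N hx'reg
  have e1 := Order.height_add_one_le hqlt
  have e2 := Order.height_add_one_le hlt
  have e3 : 1 ≤ Order.height (⟨N, hN⟩ : PrimeSpectrum (extReesBar I J)) := le_add_self.trans e1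
  calc (2 : ℕ∞) = 1 + 1 := by norm_num
    _ ≤ Order.height (⟨N, hN⟩ : PrimeSpectrum (extReesBar I J)) + 1 := by gcongr
    _ ≤ _ := e2

/-! ### The dimension of the extended Rees ring -/

lemma exists_surjective_adjoin_insert {R T : Type*} [CommRing R] [CommRing T] [Algebra R T]
    (s : Set T) (c : T) :
    ∃ g : Polynomial (Algebra.adjoin R s) →+* Algebra.adjoin R (insert c s),
      Function.Surjective g ∧ ∀ p, (g p : T) = Polynomial.aeval c p := by
  have hle : Algebra.adjoin R s ≤ Algebra.adjoin R (insert c s) :=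
    Algebra.adjoin_mono (Set.subset_insert _ _)
  let g : Polynomial (Algebra.adjoin R s) →+* Algebra.adjoin R (insert c s) :=
    Polynomial.eval₂RingHom (Subalgebra.inclusion hle).toRingHom
      ⟨c, Algebra.subset_adjoin (Set.mem_insert _ _)⟩
  have hg (p) : (g p : T) = Polynomial.aeval c p :=
    Polynomial.hom_eval₂ p _ (Algebra.adjoin R (insert c s)).val.toRingHom _
  refine ⟨g, ?_, hg⟩
  rintro ⟨x, hx⟩
  suffices ∃ p, Polynomial.aeval c p = x by
    obtain ⟨p, hp⟩ := this
    exact ⟨p, Subtype.ext ((hg p).trans hp)⟩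
  induction hx using Algebra.adjoin_induction with
  | mem x hx =>
    rcases hx with rfl | hx
    · exact ⟨Polynomial.X, by simp⟩
    · exact ⟨Polynomial.C ⟨x, Algebra.subset_adjoin hx⟩, by simp⟩
  | algebraMap r => exact ⟨Polynomial.C (algebraMap _ _ r), by simp⟩
  | add x y _ _ hx hy =>
    obtain ⟨p, rfl⟩ := hx
    obtain ⟨q, rfl⟩ := hy
    exact ⟨p + q, by simp⟩
  | mul x y _ _ hx hy =>
    obtain ⟨p, rfl⟩ := hx
    obtain ⟨q, rfl⟩ := hy
    exact ⟨p * q, by simp⟩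

lemma adjoin_insert_dim {R T : Type*} [CommRing R] [CommRing T] [Algebra R T]
    (s : Set T) (c : T) [IsNoetherianRing (Algebra.adjoin R s)] :
    IsNoetherianRing (Algebra.adjoin R (insert c s)) ∧
      ringKrullDim (Algebra.adjoin R (insert c s)) ≤ ringKrullDim (Algebra.adjoin R s) + 1 := by
  obtain ⟨g, hg, -⟩ := exists_surjective_adjoin_insert (R := R) s c
  refine ⟨isNoetherianRing_of_surjective _ _ g hg, ?_⟩
  rw [← Polynomial.ringKrullDim_of_isNoetherianRing]
  exact ringKrullDim_le_of_surjective g hg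

/-- Adjoining a fraction `c` with nonzerodivisor denominator `f` does not raise the dimension: the
kernel of `S[X] → S[c]` contains the nonzerodivisor `f X - f c`. -/
lemma adjoin_insert_dim_of_mul_mem {R T : Type*} [CommRing R] [CommRing T] [Algebra R T]
    (s : Set T) (c f : T) (hf : f ∈ nonZeroDivisors T) (hfs : f ∈ Algebra.adjoin R s)
    (hfc : f * c ∈ Algebra.adjoin R s) [IsNoetherianRing (Algebra.adjoin R s)] :
    ringKrullDim (Algebra.adjoin R (insert c s)) ≤ ringKrullDim (Algebra.adjoin R s) := by
  obtain ⟨g, hg, hgv⟩ := exists_surjective_adjoin_insert (R := R) s c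
  rcases subsingleton_or_nontrivial T with hT | hT
  · have : Subsingleton (Algebra.adjoin R (insert c s)) := inferInstance
    rw [ringKrullDim_eq_bot_of_subsingleton]
    exact bot_le
  have hf0 : f ≠ 0 := nonZeroDivisors.ne_zero hf
  have hf' : (⟨f, hfs⟩ : Algebra.adjoin R s) ∈ nonZeroDivisors (Algebra.adjoin R s) := by
    rw [mem_nonZeroDivisors_iff_right] at hf ⊢
    intro z hz
    exact Subtype.ext (hf _ (congrArg Subtype.val hz))
  let p : Polynomial (Algebra.adjoin R s) :=
    Polynomial.C ⟨f, hfs⟩ * Polynomial.X + Polynomial.C (-⟨f * c, hfc⟩)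
  have hp : p ∈ nonZeroDivisors (Polynomial (Algebra.adjoin R s)) := by
    apply Polynomial.mem_nonZeroDivisors_of_leadingCoeff
    rw [Polynomial.leadingCoeff_linear]
    · exact hf'
    · exact fun h => hf0 (congrArg Subtype.val h)
  have hp0 : g p = 0 := by
    apply Subtype.ext
    rw [hgv]
    simp [p, Algebra.algebraMap_eq_smul_one, Subalgebra.smul_def]
  have := ringKrullDim_succ_le_of_surjective g hg hp hp0
  rw [Polynomial.ringKrullDim_of_isNoetherianRing] at this
  exact ENat.WithBot.add_le_add_natCast_right_iff.mp this

lemma u1_nzd {R : Type*} [CommRing R] : mono (-1) 0 (1 : R) ∈ nonZeroDivisors (Amb R) :=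
  mono_nonZeroDivisor (one_mem _) _ _

lemma u2_nzd {R : Type*} [CommRing R] : mono 0 (-1) (1 : R) ∈ nonZeroDivisors (Amb R) :=
  mono_nonZeroDivisor (one_mem _) _ _

/-- A ring generated by `u₁`, `u₂` and finitely many elements `a t₁`, `b t₂` has dimension at most
`dim R + 2`: the two variables raise the dimension by at most two, and the remaining generators are
fractions with denominator `u₁` or `u₂`. -/
lemma adjoin_dim_le {R : Type*} [CommRing R] [IsNoetherianRing R] (F : Set (Amb R))
    (hF : F.Finite) (h : ∀ x ∈ F, (∃ a, x = mono 1 0 a) ∨ ∃ b, x = mono 0 1 b) :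
    IsNoetherianRing (Algebra.adjoin R (F ∪ {mono (-1) 0 1, mono 0 (-1) 1})) ∧
      ringKrullDim (Algebra.adjoin R (F ∪ {mono (-1) 0 1, mono 0 (-1) 1})) ≤
        ringKrullDim R + 2 := by
  induction F, hF using Set.Finite.induction_on with
  | empty =>
    rw [Set.empty_union]
    have h0 : IsNoetherianRing (Algebra.adjoin R (∅ : Set (Amb R))) ∧
        ringKrullDim (Algebra.adjoin R (∅ : Set (Amb R))) ≤ ringKrullDim R := by
      let g : R →+* Algebra.adjoin R (∅ : Set (Amb R)) := algebraMap _ _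
      have hg : Function.Surjective g := by
        rintro ⟨x, hx⟩
        rw [Algebra.adjoin_empty, Algebra.mem_bot] at hx
        obtain ⟨r, rfl⟩ := hx
        exact ⟨r, rfl⟩
      exact ⟨isNoetherianRing_of_surjective _ _ g hg, ringKrullDim_le_of_surjective g hg⟩
    have _ := h0.1
    have h1 := adjoin_insert_dim (R := R) ∅ (mono 0 (-1) (1 : R))
    have _ := h1.1
    have h2 := adjoin_insert_dim (R := R) (insert (mono 0 (-1) (1 : R)) ∅) (mono (-1) 0 (1 : R))
    rw [show ({mono 0 (-1) (1 : R)} : Set (Amb R)) = insert (mono 0 (-1) (1 : R)) ∅ by simp]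
    refine ⟨h2.1, h2.2.trans ?_⟩
    rw [show (2 : WithBot ℕ∞) = 1 + 1 by norm_num, ← add_assoc]
    gcongr
    refine h1.2.trans ?_
    gcongr
    exact h0.2
  | @insert a s _ _ ih =>
    obtain ⟨ih1, ih2⟩ := ih fun x hx => h x (Set.mem_insert_of_mem _ hx)
    rw [Set.insert_union]
    refine ⟨(adjoin_insert_dim _ a).1, le_trans ?_ ih2⟩
    rcases h a (Set.mem_insert _ _) with ⟨b, rfl⟩ | ⟨b, rfl⟩
    · refine adjoin_insert_dim_of_mul_mem _ _ (mono (-1) 0 1) u1_nzd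
        (Algebra.subset_adjoin (by simp)) ?_
      rw [mono_mul_mono, one_mul]
      exact Subalgebra.algebraMap_mem (Algebra.adjoin R _) b
    · refine adjoin_insert_dim_of_mul_mem _ _ (mono 0 (-1) 1) u2_nzd
        (Algebra.subset_adjoin (by simp)) ?_
      rw [mono_mul_mono, one_mul]
      exact Subalgebra.algebraMap_mem (Algebra.adjoin R _) b

lemma extRees_dim {R : Type*} [CommRing R] [IsNoetherianRing R] (I J : Ideal R) :
    IsNoetherianRing (extRees I J) ∧ ringKrullDim (extRees I J) ≤ ringKrullDim R + 2 := by
  obtain ⟨F, hF⟩ := IsNoetherian.noetherian I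
  obtain ⟨G, hG⟩ := IsNoetherian.noetherian J
  let X : Set (Amb R) := mono 1 0 '' (F : Set R) ∪ mono 0 1 '' (G : Set R)
  have hX : X.Finite := (F.finite_toSet.image _).union (G.finite_toSet.image _)
  have key : extRees I J = Algebra.adjoin R (X ∪ {mono (-1) 0 1, mono 0 (-1) 1}) := by
    apply le_antisymm
    · refine Algebra.adjoin_le ?_
      rintro _ ((⟨a, ha, rfl⟩ | ⟨b, hb, rfl⟩) | rfl | rfl)
      · rw [← hF] at ha
        refine Submodule.span_induction (p := fun a _ => mono 1 0 a ∈
          Algebra.adjoin R (X ∪ {mono (-1) 0 1, mono 0 (-1) 1})) ?_ ?_ ?_ ?_ ha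
        · exact fun x hx => Algebra.subset_adjoin (Or.inl (Or.inl ⟨x, hx, rfl⟩))
        · simp [mono]
        · intro x y _ _ hx hy
          simpa [mono] using add_mem hx hy
        · intro r x _ hx
          simpa [mono, AddMonoidAlgebra.smul_single] using Subalgebra.smul_mem _ hx r
      · rw [← hG] at hb
        refine Submodule.span_induction (p := fun a _ => mono 0 1 a ∈
          Algebra.adjoin R (X ∪ {mono (-1) 0 1, mono 0 (-1) 1})) ?_ ?_ ?_ ?_ hb
        · exact fun x hx => Algebra.subset_adjoin (Or.inl (Or.inr ⟨x, hx, rfl⟩))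
        · simp [mono]
        · intro x y _ _ hx hy
          simpa [mono] using add_mem hx hy
        · intro r x _ hx
          simpa [mono, AddMonoidAlgebra.smul_single] using Subalgebra.smul_mem _ hx r
      · exact Algebra.subset_adjoin (by simp)
      · exact Algebra.subset_adjoin (by simp)
    · refine Algebra.adjoin_mono ?_
      rintro _ ((⟨a, ha, rfl⟩ | ⟨b, hb, rfl⟩) | h)
      · exact Or.inl (Or.inl ⟨a, hF ▸ Submodule.subset_span ha, rfl⟩)
      · exact Or.inl (Or.inr ⟨b, hG ▸ Submodule.subset_span hb, rfl⟩)
      · exact Or.inr h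
  rw [key]
  refine adjoin_dim_le X hX ?_
  rintro _ (⟨a, -, rfl⟩ | ⟨b, -, rfl⟩)
  · exact Or.inl ⟨a, rfl⟩
  · exact Or.inr ⟨b, rfl⟩

/-! ### The extended Rees ring of the second ideal -/

/-- The subring `⊕_s J^s t₂^s` of `𝓡'(I,J)`, that is, the extended Rees ring of `J`; it is obtained
as the image of `𝓡'(I,J)` under `t₁ ↦ 1`. -/
noncomputable def sndRees {R : Type*} [CommRing R] (I J : Ideal R) : Subalgebra R (Amb R) :=
  (extRees I J).map (specOne R)

lemma sndRees_le {R : Type*} [CommRing R] (I J : Ideal R) : sndRees I J ≤ extRees I J := by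
  rintro _ ⟨z, hz, rfl⟩
  exact specOne_mem_extRees hz

lemma sndRees_noetherian {R : Type*} [CommRing R] [IsNoetherianRing R] (I J : Ideal R) :
    IsNoetherianRing (sndRees I J) := by
  have _ := (extRees_dim I J).1
  refine isNoetherianRing_of_surjective (extRees I J) (sndRees I J)
    (((specOne R).comp (extRees I J).val).codRestrict (sndRees I J)
      fun x => ⟨x, x.2, rfl⟩).toRingHom ?_
  rintro ⟨_, z, hz, rfl⟩
  exact ⟨⟨z, hz⟩, rfl⟩

lemma specOne_coeff_of_ne {R : Type*} [CommRing R] (z : Amb R) {r : ℤ} (hr : r ≠ 0) (s : ℤ) :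
    (specOne R z).coeff (r, s) = 0 := by
  induction z using AddMonoidAlgebra.induction_linear with
  | zero => simp
  | add x y hx hy => simp [hx, hy]
  | single g c =>
    rw [show AddMonoidAlgebra.single g c = mono g.1 g.2 c from rfl, specOne_mono, coeff_mono]
    simp [hr.symm]

lemma sndRees_coeff_of_ne {R : Type*} [CommRing R] {I J : Ideal R} {z : Amb R}
    (hz : z ∈ sndRees I J) {r : ℤ} (hr : r ≠ 0) (s : ℤ) : z.coeff (r, s) = 0 := by
  obtain ⟨y, -, rfl⟩ := hz
  exact specOne_coeff_of_ne y hr s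

lemma mono_mem_sndRees {R : Type*} [CommRing R] {I J : Ideal R} {s : ℤ} {c : R}
    (hc : c ∈ IJ I J 0 s) : mono 0 s c ∈ sndRees I J :=
  ⟨mono 0 s c, mono_mem_extRees hc, specOne_mono 0 s c⟩

lemma mem_sndRees {R : Type*} [CommRing R] {I J : Ideal R} {z : Amb R}
    (hz : z ∈ extRees I J) (h : ∀ r s, r ≠ 0 → z.coeff (r, s) = 0) : z ∈ sndRees I J := by
  refine mem_of_mono_coeff_mem _ z fun r s => ?_
  by_cases hr : r = 0
  · subst hr
    exact mono_mem_sndRees (mem_extRees_iff.1 hz 0 s)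
  · rw [h r s hr]
    simp [mono]

/-- The contraction to `⊕_s J^s t₂^s` of the extension of `p` to the Laurent polynomial ring. -/
noncomputable def starIdeal {R : Type*} [CommRing R] (I J : Ideal R) (p : Ideal R) :
    Ideal (sndRees I J) :=
  RingHom.ker ((AddMonoidAlgebra.mapRingHom (ℤ × ℤ) (Ideal.Quotient.mk p)).comp
    (sndRees I J).val.toRingHom)

lemma mem_starIdeal {R : Type*} [CommRing R] {I J p : Ideal R} {z : sndRees I J} :
    z ∈ starIdeal I J p ↔ ∀ g, (z : Amb R).coeff g ∈ p := by
  have h0 (g) : (z : Amb R).coeff g ∈ p ↔ Ideal.Quotient.mk p ((z : Amb R).coeff g) = 0 :=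
    Ideal.Quotient.eq_zero_iff_mem.symm
  simp only [h0]
  constructor
  · intro h g
    exact congrArg (fun w => w.coeff g) (RingHom.mem_ker.1 h)
  · intro h
    refine RingHom.mem_ker.2 ?_
    ext g
    exact h g

instance starIdeal_isPrime {R : Type*} [CommRing R] (I J p : Ideal R) [p.IsPrime] :
    (starIdeal I J p).IsPrime := RingHom.ker_isPrime _

/-- `starIdeal` as a map on prime spectra. -/
noncomputable def starSpec {R : Type*} [CommRing R] (I J : Ideal R) (p : PrimeSpectrum R) :
    PrimeSpectrum (sndRees I J) := ⟨starIdeal I J p.asIdeal, inferInstance⟩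

lemma starSpec_strictMono {R : Type*} [CommRing R] (I J : Ideal R) :
    StrictMono (starSpec I J) := by
  refine Monotone.strictMono_of_injective ?_ ?_
  · intro p q hpq z hz
    exact mem_starIdeal.2 fun g => hpq (mem_starIdeal.1 hz g)
  · intro p q hpq
    have key (p : PrimeSpectrum R) (x : R) :
        x ∈ p.asIdeal ↔ algebraMap R (sndRees I J) x ∈ (starSpec I J p).asIdeal := by
      refine Iff.trans ?_ mem_starIdeal.symm
      constructor
      · rintro hx ⟨r, s⟩
        rw [show ((algebraMap R (sndRees I J) x : sndRees I J) : Amb R) = mono 0 0 x from rfl,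
          coeff_mono]
        split_ifs <;> simp [hx]
      · intro h
        have := h (0, 0)
        rw [show ((algebraMap R (sndRees I J) x : sndRees I J) : Amb R) = mono 0 0 x from rfl,
          coeff_mono] at this
        simpa using this
    ext x
    rw [key p, key q, hpq]

lemma u2_mem_sndRees {R : Type*} [CommRing R] (I J : Ideal R) :
    mono 0 (-1) (1 : R) ∈ sndRees I J := mono_mem_sndRees (by simp [IJ])

/-- Extending a chain of primes of `R` by a maximal ideal containing `u₂` gives a prime of height at
least three in the extended Rees ring of `J`; killing `u₂` lowers the height by at most one. -/
lemma two_le_dim_sndRees_quotient {R : Type*} [CommRing R] [IsLocalRing R] [IsNoetherianRing R]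
    (hdim : ringKrullDim R = 2) (I J : Ideal R) (hJ : J ≤ IsLocalRing.maximalIdeal R) :
    2 ≤ ringKrullDim (sndRees I J ⧸
      Ideal.span {(⟨mono 0 (-1) 1, u2_mem_sndRees I J⟩ : sndRees I J)}) := by
  have _ := sndRees_noetherian I J
  let 𝔪 : PrimeSpectrum R := IsLocalRing.closedPoint R
  have h2 : 2 ≤ Order.height 𝔪 := by
    have := IsLocalRing.maximalIdeal_height_eq_ringKrullDim (R := R)
    rw [hdim] at this
    have h : 𝔪.asIdeal.height = 2 := WithBot.coe_injective this
    rw [PrimeSpectrum.height_eq_orderHeight] at h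
    exact h.ge
  have h2' : 2 ≤ Order.height (starSpec I J 𝔪) :=
    h2.trans (Order.height_le_height_apply_of_strictMono _ (starSpec_strictMono I J) 𝔪)
  let u : sndRees I J := ⟨mono 0 (-1) 1, u2_mem_sndRees I J⟩
  have hne : starIdeal I J 𝔪.asIdeal ⊔ Ideal.span {u} ≠ ⊤ := by
    intro h
    obtain ⟨z, hz, y, hy, hzy⟩ := Submodule.mem_sup.1 ((Ideal.eq_top_iff_one _).1 h)
    obtain ⟨v, rfl⟩ := Ideal.mem_span_singleton'.1 hy
    have e := congrArg (fun w : sndRees I J => (w : Amb R).coeff (0, 0)) hzy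
    have e1 : (z : Amb R).coeff (0, 0) + (v : Amb R).coeff (0, 1) = 1 := by
      have e2 : ((v * u : sndRees I J) : Amb R).coeff (0, 0) = (v : Amb R).coeff (0, 1) := by
        change ((v : Amb R) * mono 0 (-1) 1).coeff (0, 0) = _
        simp [mono, AddMonoidAlgebra.coeff_mul_single_apply]
      rw [← e2]
      refine e.trans ?_
      change (1 : Amb R).coeff 0 = 1
      simp [AddMonoidAlgebra.one_def]
    have hv : (v : Amb R).coeff (0, 1) ∈ J := by
      simpa [IJ] using mem_extRees_iff.1 (sndRees_le I J v.2) 0 1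
    refine 𝔪.isPrime.ne_top ((Ideal.eq_top_iff_one _).2 ?_)
    rw [← e1]
    exact add_mem (mem_starIdeal.1 hz (0, 0)) (hJ hv)
  obtain ⟨M, hM, hle⟩ := Ideal.exists_le_maximal _ hne
  have hMp := hM.isPrime
  have huM : u ∈ M := hle (Ideal.mem_sup_right (Ideal.mem_span_singleton_self u))
  have hlt : starSpec I J 𝔪 < ⟨M, hMp⟩ := by
    refine lt_of_le_of_ne (le_sup_left.trans hle) fun h => ?_
    have h' : u ∈ starIdeal I J 𝔪.asIdeal := by
      have h0 : starIdeal I J 𝔪.asIdeal = M := congrArg PrimeSpectrum.asIdeal h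
      rwa [h0]
    have := mem_starIdeal.1 h' (0, -1)
    rw [show (u : Amb R) = mono 0 (-1) 1 from rfl, coeff_mono] at this
    exact 𝔪.isPrime.ne_top ((Ideal.eq_top_iff_one _).2 (by simpa using this))
  have h3 : 3 ≤ M.height := by
    rw [show M.height = Order.height (⟨M, hMp⟩ : PrimeSpectrum _) from
      PrimeSpectrum.height_eq_orderHeight ⟨M, hMp⟩]
    calc (3 : ℕ∞) = 2 + 1 := by norm_num
      _ ≤ Order.height (starSpec I J 𝔪) + 1 := by gcongr
      _ ≤ _ := Order.height_add_one_le hlt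
  have h4 := Ideal.height_le_ringKrullDim_quotient_add_one huM
  have h5 : (2 : WithBot ℕ∞) + 1 ≤ ringKrullDim (sndRees I J ⧸ Ideal.span {u}) + 1 := by
    refine le_trans ?_ h4
    rw [show (2 : WithBot ℕ∞) + 1 = ((3 : ℕ∞) : WithBot ℕ∞) by norm_num]
    exact_mod_cast h3
  exact ENat.WithBot.add_le_add_natCast_right_iff.mp h5

/-! ### A prime of small height in the extended Rees ring -/

/-- The ideal `⊕_{r ≠ 0, s} I^r J^s t₁^r t₂^s ⊕ ⊕_s I J^s t₂^s` of `𝓡'(I,J)`. It is generated by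
`u₁` and the homogeneous elements of degree `(r, s)` with `r ≥ 1`. -/
noncomputable def fstIdeal {R : Type*} [CommRing R] (I J : Ideal R) : Ideal (extRees I J) where
  carrier := {z | ∀ s, (z : Amb R).coeff (0, s) ∈ IJ I J 1 s}
  zero_mem' s := by simp
  add_mem' ha hb s := by simpa using add_mem (ha s) (hb s)
  smul_mem' a z hz s := by
    classical
    change ((a : Amb R) * (z : Amb R)).coeff (0, s) ∈ _
    rw [AddMonoidAlgebra.coeff_mul]
    refine sum_mem fun g _ => sum_mem fun h _ => ?_
    dsimp only
    split_ifs with hgh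
    · have h1 : g.1 + h.1 = 0 := congrArg Prod.fst hgh
      have h2 : g.2 + h.2 = s := congrArg Prod.snd hgh
      have ha := mem_extRees_iff.1 a.2 g.1 g.2
      have hz' := mem_extRees_iff.1 z.2 h.1 h.2
      obtain hg | hg | hg := lt_trichotomy g.1 0
      · -- `h.1 ≥ 1`, so the second factor already lies in `I`
        have : (z : Amb R).coeff h ∈ IJ I J 1 h.2 :=
          Ideal.mul_mono_left (Ideal.pow_le_pow_right (by omega)) hz'
        have ha' : (a : Amb R).coeff g ∈ IJ I J 0 g.2 :=
          Ideal.mul_mono_left (Ideal.pow_le_pow_right (by simp)) ha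
        have := IJ_mul_le I J _ _ _ _ (Ideal.mul_mem_mul ha' this)
        rwa [h2, zero_add] at this
      · have hh : h.1 = 0 := by omega
        have h3 := hz h.2
        rw [← hh] at h3
        rw [show IJ I J g.1 = IJ I J 0 by rw [hg]] at ha
        have := IJ_mul_le I J _ _ _ _ (Ideal.mul_mem_mul ha h3)
        rwa [h2, zero_add] at this
      · have : (a : Amb R).coeff g ∈ IJ I J 1 g.2 :=
          Ideal.mul_mono_left (Ideal.pow_le_pow_right (by omega)) ha
        have hz' : (z : Amb R).coeff h ∈ IJ I J 0 h.2 :=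
          Ideal.mul_mono_left (Ideal.pow_le_pow_right (by simp)) hz'
        have := IJ_mul_le I J _ _ _ _ (Ideal.mul_mem_mul this hz')
        rwa [h2, add_zero] at this
    · simp

lemma mem_fstIdeal {R : Type*} [CommRing R] {I J : Ideal R} {z : extRees I J} :
    z ∈ fstIdeal I J ↔ ∀ s, (z : Amb R).coeff (0, s) ∈ IJ I J 1 s := Iff.rfl

lemma mono_mem_fstIdeal {R : Type*} [CommRing R] {I J : Ideal R} {r s : ℤ} (hr : r ≠ 0) {c : R}
    (h : mono r s c ∈ extRees I J) : (⟨mono r s c, h⟩ : extRees I J) ∈ fstIdeal I J := by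
  refine mem_fstIdeal.2 fun s' => ?_
  rw [coeff_mono]
  simp [hr]

/-- The composite `⊕_s J^s t₂^s → 𝓡'(I,J) → 𝓡'(I,J) ⧸ fstIdeal I J`. -/
noncomputable def sndToQuot {R : Type*} [CommRing R] (I J : Ideal R) :
    sndRees I J →+* extRees I J ⧸ fstIdeal I J :=
  (Ideal.Quotient.mk (fstIdeal I J)).comp (Subalgebra.inclusion (sndRees_le I J)).toRingHom

lemma mem_ker_sndToQuot {R : Type*} [CommRing R] {I J : Ideal R} {z : sndRees I J} :
    z ∈ RingHom.ker (sndToQuot I J) ↔ ∀ s, (z : Amb R).coeff (0, s) ∈ IJ I J 1 s :=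
  RingHom.mem_ker.trans Ideal.Quotient.eq_zero_iff_mem

lemma sndToQuot_surjective {R : Type*} [CommRing R] (I J : Ideal R) :
    Function.Surjective (sndToQuot I J) := by
  intro q
  obtain ⟨z, rfl⟩ := Ideal.Quotient.mk_surjective q
  have hc (r s : ℤ) : ((coact (AddMonoidHom.fst ℤ ℤ) (.id _) (z : Amb R)).coeff 0).coeff (r, s) =
      if r = 0 then (z : Amb R).coeff (r, s) else 0 :=
    coact_id_coeff_coeff (AddMonoidHom.fst ℤ ℤ) (z : Amb R) 0 (r, s)
  have hy : (coact (AddMonoidHom.fst ℤ ℤ) (.id _) (z : Amb R)).coeff 0 ∈ sndRees I J := by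
    refine mem_sndRees (mem_extRees_iff.2 fun r s => ?_) fun r s hr => ?_
    · rw [hc]
      split_ifs
      · exact mem_extRees_iff.1 z.2 r s
      · simp
    · rw [hc, if_neg hr]
  refine ⟨⟨_, hy⟩, Ideal.Quotient.eq.2 (mem_fstIdeal.2 fun s => ?_)⟩
  change ((coact (AddMonoidHom.fst ℤ ℤ) (.id _) (z : Amb R)).coeff 0 - (z : Amb R)).coeff (0, s) ∈ _
  have : ((coact (AddMonoidHom.fst ℤ ℤ) (.id _) (z : Amb R)).coeff 0 -
      (z : Amb R)).coeff (0, s) = 0 := by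
    have := hc 0 s
    rw [if_pos rfl] at this
    simp [AddMonoidAlgebra.coeff_sub, this]
  rw [this]
  exact zero_mem _

/-- Up to radical, the kernel `⊕_s I J^s t₂^s` is contained in `(u₂)`. -/
lemma ker_sndToQuot_le {R : Type*} [CommRing R] {I J : Ideal R} (hIJ : I ≤ J.radical)
    (q : Ideal (sndRees I J)) [q.IsPrime]
    (hq : (⟨mono 0 (-1) 1, u2_mem_sndRees I J⟩ : sndRees I J) ∈ q) :
    RingHom.ker (sndToQuot I J) ≤ q := by
  intro z hz
  rw [mem_ker_sndToQuot] at hz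
  -- elements of `I` have a power in `J`, and elements of `J` are divisible by `u₂`
  have hI (a : R) (ha : a ∈ I) : algebraMap R (sndRees I J) a ∈ q := by
    obtain ⟨k, hk⟩ := hIJ ha
    refine ‹q.IsPrime›.mem_of_pow_mem k ?_
    have h1 : mono 0 1 (a ^ k) ∈ sndRees I J := mono_mem_sndRees (by simpa [IJ] using hk)
    have : algebraMap R (sndRees I J) a ^ k =
        ⟨_, h1⟩ * (⟨mono 0 (-1) 1, u2_mem_sndRees I J⟩ : sndRees I J) := by
      rw [← map_pow]
      refine Subtype.ext ?_
      change mono 0 0 (a ^ k) = mono 0 1 (a ^ k) * mono 0 (-1) 1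
      rw [mono_mul_mono]; simp
    rw [this]
    exact q.mul_mem_left _ hq
  have key (s : ℤ) (c : R) (hc : c ∈ IJ I J 1 s) :
      mono 0 s c ∈ q.toAddSubmonoid.map (sndRees I J).val := by
    unfold IJ at hc
    induction hc using Submodule.mul_induction_on' with
    | mem_mul_mem a ha b hb =>
      have hb' : mono 0 s b ∈ sndRees I J := mono_mem_sndRees (by simpa [IJ] using hb)
      refine ⟨algebraMap R (sndRees I J) a * ⟨_, hb'⟩,
        q.mul_mem_right _ (hI a (by simpa using ha)), ?_⟩
      change mono 0 0 a * mono 0 s b = _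
      rw [mono_mul_mono]; simp
    | add x _ y _ hx hy =>
      rw [show mono 0 s (x + y) = mono 0 s x + mono 0 s y from AddMonoidAlgebra.single_add ..]
      exact add_mem hx hy
  obtain ⟨z', hz', e⟩ := mem_of_mono_coeff_mem (q.toAddSubmonoid.map (sndRees I J).val)
    (z : Amb R) fun r s => by
      by_cases hr : r = 0
      · subst hr; exact key s _ (hz s)
      · rw [sndRees_coeff_of_ne z.2 hr s, show mono r s (0 : R) = 0 by simp [mono]]
        exact zero_mem _
  rwa [← Subtype.ext e]

lemma two_le_dim_quotient_fstIdeal {R : Type*} [CommRing R] [IsLocalRing R] [IsNoetherianRing R]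
    (hdim : ringKrullDim R = 2) {I J : Ideal R} (hI : IsMPrimary I) (hJ : IsMPrimary J) :
    2 ≤ ringKrullDim (extRees I J ⧸ fstIdeal I J) := by
  have hJm : J ≤ IsLocalRing.maximalIdeal R := hJ ▸ Ideal.le_radical
  have hIJ : I ≤ J.radical := by rw [hJ, ← hI]; exact Ideal.le_radical
  refine (two_le_dim_sndRees_quotient hdim I J hJm).trans ?_
  rw [← ringKrullDim_eq_of_ringEquiv (R := sndRees I J ⧸ RingHom.ker (sndToQuot I J))
    (S := extRees I J ⧸ fstIdeal I J)
    (RingHom.quotientKerEquivOfSurjective (sndToQuot_surjective I J)),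
    ringKrullDim_quotient, ringKrullDim_quotient]
  have hsub : PrimeSpectrum.zeroLocus (Ideal.span
      {(⟨mono 0 (-1) 1, u2_mem_sndRees I J⟩ : sndRees I J)} : Set (sndRees I J)) ⊆
      PrimeSpectrum.zeroLocus (RingHom.ker (sndToQuot I J) : Set (sndRees I J)) :=
    fun q hq => ker_sndToQuot_le hIJ q.asIdeal (hq (Ideal.mem_span_singleton_self _))
  exact Order.krullDim_le_of_strictMono (Set.inclusion hsub) fun _ _ h => h

/-- Some prime over `fstIdeal I J` has coheight at least two, and `dim 𝓡' ≤ 4`. -/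
lemma exists_prime_height_le_two {R : Type*} [CommRing R] [IsLocalRing R] [IsNoetherianRing R]
    (hdim : ringKrullDim R = 2) {I J : Ideal R} (hI : IsMPrimary I) (hJ : IsMPrimary J) :
    ∃ Q : PrimeSpectrum (extRees I J), fstIdeal I J ≤ Q.asIdeal ∧ Order.height Q ≤ 2 := by
  have h := two_le_dim_quotient_fstIdeal hdim hI hJ
  rw [ringKrullDim_quotient] at h
  have hne : Nonempty (PrimeSpectrum.zeroLocus (fstIdeal I J : Set (extRees I J))) := by
    by_contra hc
    rw [not_nonempty_iff] at hc
    rw [Order.krullDim_eq_bot] at h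
    exact absurd h (by decide)
  obtain ⟨Q, hQ⟩ : ∃ Q : PrimeSpectrum.zeroLocus (fstIdeal I J : Set (extRees I J)),
      2 ≤ Order.coheight Q := by
    by_contra! hc
    rw [Order.krullDim_eq_iSup_coheight] at h
    have h' : (⨆ a : PrimeSpectrum.zeroLocus (fstIdeal I J : Set (extRees I J)),
        (Order.coheight a : WithBot ℕ∞)) ≤ ((1 : ℕ∞) : WithBot ℕ∞) :=
      iSup_le fun Q => by
        have := Order.le_of_lt_add_one (show Order.coheight Q < 1 + 1 by
          rw [one_add_one_eq_two]; exact hc Q)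
        exact_mod_cast this
    exact absurd (h.trans h') (by decide)
  refine ⟨Q.1, Q.2, ?_⟩
  have h1 : 2 ≤ Order.coheight Q.1 :=
    hQ.trans (Order.coheight_le_coheight_apply_of_strictMono Subtype.val (fun _ _ h => h) Q)
  have _ : Nonempty (PrimeSpectrum (extRees I J)) := ⟨Q.1⟩
  have h2 := (extRees_dim I J).2
  rw [hdim, ringKrullDim, Order.krullDim_eq_iSup_height_add_coheight_of_nonempty] at h2
  have h3 : Order.height Q.1 + Order.coheight Q.1 ≤ 2 + 2 := by
    refine (le_iSup (fun a : PrimeSpectrum (extRees I J) =>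
      Order.height a + Order.coheight a) Q.1).trans ?_
    exact WithBot.coe_le_coe.1 h2
  have h4 : Order.height Q.1 + 2 ≤ 2 + 2 := le_trans (by gcongr) h3
  exact (ENat.add_le_add_iff_right (by decide)).1 h4

/-! ### The upper bound -/

/-- The degree `n (r, s)` part of an integral equation of degree `n` for `z = c t₁^r t₂^s` writes
`z ^ n` as a combination of homogeneous elements of `𝓡'` of degree `(i r, i s)` with `i ≥ 1`, all of
which lie in `fstIdeal I J`. -/
lemma mono_mem_of_fstIdeal_le {R : Type*} [CommRing R] {I J : Ideal R} {r s : ℤ} (hr : 1 ≤ r) {c : R}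
    (hz : mono r s c ∈ extReesBar I J) {P : Ideal (extReesBar I J)} [P.IsPrime]
    (hP : ∀ x (hx : x ∈ extRees I J), (⟨x, hx⟩ : extRees I J) ∈ fstIdeal I J →
      (⟨x, mem_extReesBar_of_mem_extRees hx⟩ : extReesBar I J) ∈ P) :
    (⟨mono r s c, hz⟩ : extReesBar I J) ∈ P := by
  obtain ⟨p, hp, h⟩ : IsIntegral (extRees I J) (mono r s c) := id hz
  set n := p.natDegree with hn
  -- the part of `p.coeff i` that contributes to degree `n (r, s)` in `p(z)`
  let a (i : ℕ) : R := (p.coeff i : Amb R).coeff (((n : ℤ) - i) * r, ((n : ℤ) - i) * s)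
  have ha (i : ℕ) : mono (((n : ℤ) - i) * r) (((n : ℤ) - i) * s) (a i) ∈ extRees I J :=
    mono_mem_extRees (mem_extRees_iff.1 (p.coeff i).2 _ _)
  have hc : c ^ n + ∑ i ∈ Finset.range n, a i * c ^ i = 0 := by
    rw [Polynomial.eval₂_eq_sum_range, ← hn, Finset.sum_range_succ] at h
    have h' := congrArg (fun w : Amb R => w.coeff (n * r, n * s)) h
    have e (i : ℕ) : ((p.coeff i : Amb R) * mono r s c ^ i).coeff (n * r, n * s) = a i * c ^ i := by
      rw [mono_pow]
      simp only [mono, AddMonoidAlgebra.coeff_mul_single_apply, a]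
      congr 2
      ext <;> simp <;> ring
    have e0 : a n = 1 := by
      have : p.coeff n = 1 := hp.coeff_natDegree
      simp only [a, this, sub_self, zero_mul]
      exact Finsupp.single_eq_same
    have h'' : ∑ i ∈ Finset.range n, a i * c ^ i + a n * c ^ n = 0 := by
      rw [← e n, ← Finset.sum_congr rfl fun i _ => e i]
      refine Eq.trans ?_ h'
      simp [AddMonoidAlgebra.coeff_add, AddMonoidAlgebra.coeff_sum]
    rw [e0, one_mul, add_comm] at h''
    exact h''
  refine ‹P.IsPrime›.mem_of_pow_mem n ?_
  let y (i : ℕ) : extReesBar I J := ⟨_, mem_extReesBar_of_mem_extRees (ha i)⟩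
  have e : (⟨mono r s c, hz⟩ : extReesBar I J) ^ n =
      - ∑ i ∈ Finset.range n, y i * ⟨mono r s c, hz⟩ ^ i := by
    rw [eq_neg_iff_add_eq_zero]
    refine Subtype.ext ?_
    push_cast
    have e1 (i : ℕ) : mono (((n : ℤ) - i) * r) (((n : ℤ) - i) * s) (a i) * mono r s c ^ i =
        mono (n * r) (n * s) (a i * c ^ i) := by
      rw [mono_pow, mono_mul_mono]
      congr 1 <;> ring
    simp only [y, e1]
    rw [mono_pow, show (0 : Amb R) = mono (n * r) (n * s) 0 by simp [mono], ← hc]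
    exact ((map_add (AddMonoidAlgebra.singleAddHom ((n : ℤ) * r, (n : ℤ) * s)) _ _).trans
      (congrArg _ (map_sum (AddMonoidAlgebra.singleAddHom _) _ _))).symm
  rw [e]
  refine neg_mem (sum_mem fun i hi => P.mul_mem_right _ (hP _ (ha i) (mono_mem_fstIdeal ?_ _)))
  have := Finset.mem_range.1 hi
  exact mul_ne_zero (by omega) (by omega)

/-- Lying over and incomparability for an integral extension. -/
lemma exists_prime_over_height_le {A B : Type*} [CommRing A] [CommRing B] (f : A →+* B)
    (hf : f.IsIntegral) (hinj : Function.Injective f) (Q : PrimeSpectrum A) :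
    ∃ P : PrimeSpectrum B, P.asIdeal.comap f = Q.asIdeal ∧ Order.height P ≤ Order.height Q := by
  algebraize [f]
  obtain ⟨P, -, hP, hPQ⟩ := Ideal.exists_ideal_over_prime_of_isIntegral (S := B) Q.asIdeal ⊥ (by
    intro x hx
    rw [show x = 0 from (map_eq_zero_iff f hinj).1 hx]
    exact zero_mem _)
  refine ⟨⟨P, hP⟩, hPQ, ?_⟩
  have hmono : StrictMono (PrimeSpectrum.comap (algebraMap A B)) :=
    fun p q hpq => Ideal.IsIntegral.comap_lt_comap hpq
  have := Order.height_le_height_apply_of_strictMono _ hmono ⟨P, hP⟩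
  rwa [show PrimeSpectrum.comap (algebraMap A B) ⟨P, hP⟩ = Q from PrimeSpectrum.ext hPQ] at this

lemma inclusion_isIntegral {R : Type*} [CommRing R] (I J : Ideal R) :
    (Subalgebra.inclusion (fun _ => mem_extReesBar_of_mem_extRees :
      extRees I J ≤ extReesBar I J)).toRingHom.IsIntegral := by
  rintro ⟨x, hx⟩
  obtain ⟨p, hp, h⟩ : IsIntegral (extRees I J) x := id hx
  refine ⟨p, hp, Subtype.ext ?_⟩
  exact (Polynomial.hom_eval₂ p _ (extReesBar I J).val.toRingHom _).trans h

lemma height_fst_eq_two {R : Type*} [CommRing R] [IsLocalRing R] [IsNoetherianRing R]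
    (hCM : IsCMLocalRing R) (hdim : ringKrullDim R = 2)
    (I J : Ideal R) (hI : IsMPrimary I) (hJ : IsMPrimary J) :
    idealHeight (Ideal.span {(⟨mono (-1) 0 1, u1_mem I J⟩ : ↥(extReesBar I J))} ⊔
        plusIdeal1 (extReesBar I J)) = 2 := by
  refine le_antisymm ?_ (le_sInf ?_)
  · obtain ⟨Q, hLQ, hQ⟩ := exists_prime_height_le_two hdim hI hJ
    obtain ⟨P, hPQ, hPh⟩ := exists_prime_over_height_le _ (inclusion_isIntegral I J)
      (Subalgebra.inclusion_injective _) Q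
    refine le_trans (sInf_le ⟨P, ?_, rfl⟩) (hPh.trans hQ)
    have hmem : ∀ x (hx : x ∈ extRees I J), (⟨x, hx⟩ : extRees I J) ∈ fstIdeal I J →
        (⟨x, mem_extReesBar_of_mem_extRees hx⟩ : extReesBar I J) ∈ P.asIdeal := by
      intro x hx hxL
      have := hLQ hxL
      rw [← hPQ] at this
      exact this
    refine sup_le ((Ideal.span_singleton_le_iff_mem _).2 ?_) (Ideal.span_le.2 ?_)
    · exact hmem _ (u1_mem_extRees I J) (mono_mem_fstIdeal (by decide) _)
    · rintro ⟨x, hx⟩ ⟨r, s, hr, c, rfl⟩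
      exact mono_mem_of_fstIdeal_le hr hx hmem
  · obtain ⟨x, hxI, hx⟩ := exists_regular_mem hCM hdim I hI
    rintro _ ⟨P, hP, rfl⟩
    exact two_le_height I J hxI hx P hP

/-! ### Exchanging the two variables -/

/-- The exchange of the variables `t₁` and `t₂`. -/
noncomputable def swapVars (R : Type*) [CommRing R] : Amb R →ₐ[R] Amb R :=
  AddMonoidAlgebra.mapDomainAlgHom R R (AddEquiv.prodComm : ℤ × ℤ ≃+ ℤ × ℤ).toAddMonoidHom

lemma swapVars_mono {R : Type*} [CommRing R] (r s : ℤ) (c : R) :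
    swapVars R (mono r s c) = mono s r c :=
  AddMonoidAlgebra.mapDomain_single ..

lemma swapVars_swapVars {R : Type*} [CommRing R] (z : Amb R) : swapVars R (swapVars R z) = z := by
  induction z using AddMonoidAlgebra.induction_linear with
  | zero => simp
  | add x y hx hy => simp [hx, hy]
  | single g c =>
    rw [show AddMonoidAlgebra.single g c = mono g.1 g.2 c from rfl, swapVars_mono, swapVars_mono]

lemma swapVars_mem_extRees {R : Type*} [CommRing R] {I J : Ideal R} {z : Amb R}
    (hz : z ∈ extRees I J) : swapVars R z ∈ extRees J I := by
  suffices extRees I J ≤ (extRees J I).comap (swapVars R) from this hz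
  refine Algebra.adjoin_le ?_
  rintro _ ((⟨a, ha, rfl⟩ | ⟨b, hb, rfl⟩) | rfl | rfl) <;>
    simp only [Subalgebra.coe_comap, Set.mem_preimage, swapVars_mono, SetLike.mem_coe]
  · exact Algebra.subset_adjoin (Or.inl (Or.inr ⟨a, ha, rfl⟩))
  · exact Algebra.subset_adjoin (Or.inl (Or.inl ⟨b, hb, rfl⟩))
  · exact u2_mem_extRees J I
  · exact u1_mem_extRees J I

lemma swapVars_mem_extReesBar {R : Type*} [CommRing R] {I J : Ideal R} {z : Amb R}
    (hz : z ∈ extReesBar I J) : swapVars R z ∈ extReesBar J I := by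
  let κ : extRees I J →+* extRees J I :=
    (((swapVars R).comp (extRees I J).val).codRestrict (extRees J I)
      fun x => swapVars_mem_extRees x.2).toRingHom
  obtain ⟨p, hp, h⟩ := hz
  refine ⟨p.map κ, hp.map κ, ?_⟩
  rw [Polynomial.eval₂_map]
  have := congrArg (swapVars R) h
  rw [map_zero] at this
  rw [← this]
  exact (Polynomial.hom_eval₂ p _ (swapVars R).toRingHom z).symm

/-- The isomorphism `\overline{𝓡'}(I,J) ≃ \overline{𝓡'}(J,I)` exchanging the variables. -/
noncomputable def swapEquiv {R : Type*} [CommRing R] (I J : Ideal R) :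
    extReesBar I J ≃+* extReesBar J I :=
  RingEquiv.ofRingHom
    (((swapVars R).comp (extReesBar I J).val).codRestrict (extReesBar J I)
      fun x => swapVars_mem_extReesBar x.2).toRingHom
    (((swapVars R).comp (extReesBar J I).val).codRestrict (extReesBar I J)
      fun x => swapVars_mem_extReesBar x.2).toRingHom
    (RingHom.ext fun _ => Subtype.ext (swapVars_swapVars _))
    (RingHom.ext fun _ => Subtype.ext (swapVars_swapVars _))

lemma coe_swapEquiv {R : Type*} [CommRing R] {I J : Ideal R} (z : extReesBar I J) :
    (swapEquiv I J z : Amb R) = swapVars R z := rfl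

/-- Heights of ideals are invariant under ring isomorphisms. -/
lemma idealHeight_map {A B : Type*} [CommRing A] [CommRing B] (e : A ≃+* B) (K : Ideal A) :
    idealHeight (K.map e) = idealHeight K := by
  unfold idealHeight
  congr 1
  ext h
  constructor
  · rintro ⟨P, hP, rfl⟩
    refine ⟨(PrimeSpectrum.comapEquiv e).symm P, Ideal.map_le_iff_le_comap.1 hP, ?_⟩
    exact (Order.height_orderIso _ _).symm
  · rintro ⟨P, hP, rfl⟩
    refine ⟨PrimeSpectrum.comapEquiv e P, ?_, (Order.height_orderIso _ _).symm⟩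
    refine (Ideal.map_mono hP).trans ?_
    rw [Ideal.map_le_iff_le_comap]
    intro x hx
    change e.symm (e x) ∈ P.asIdeal
    simpa using hx

lemma map_swapEquiv {R : Type*} [CommRing R] (I J : Ideal R) :
    (Ideal.span {(⟨mono (-1) 0 1, u1_mem J I⟩ : ↥(extReesBar J I))} ⊔
      plusIdeal1 (extReesBar J I)).map (swapEquiv J I) =
    Ideal.span {(⟨mono 0 (-1) 1, u2_mem I J⟩ : ↥(extReesBar I J))} ⊔
      plusIdeal2 (extReesBar I J) := by
  rw [Ideal.map_sup, plusIdeal1, plusIdeal2, Ideal.map_span, Ideal.map_span, Set.image_singleton]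
  congr 2
  · congr 1
    exact Subtype.ext (swapVars_mono _ _ _)
  · ext x
    constructor
    · rintro ⟨y, ⟨r, s, hr, c, hy⟩, rfl⟩
      refine ⟨s, r, hr, c, ?_⟩
      change swapVars R y = _
      rw [hy, swapVars_mono]
    · rintro ⟨r, s, hs, c, hx⟩
      refine ⟨swapEquiv I J x, ⟨s, r, hs, c, ?_⟩, Subtype.ext (swapVars_swapVars _)⟩
      change swapVars R x = _
      rw [hx, swapVars_mono]

/-- Lemma 2.2. Let `(R,𝔪)` be an analytically unramified Cohen-Macaulay
local ring of dimension `2` and `I`, `J` be `𝔪`-primary ideals.  Then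
`ht (u₁, \overline{𝓡'}₁⁺) = ht (u₂, \overline{𝓡'}₂⁺) = 2` in the bigraded extended Rees
ring `\overline{𝓡'} = \overline{𝓡'}(I,J)`. -/
theorem height_u_plusIdeal_eq_two
    (R : Type*) [CommRing R] [IsLocalRing R] [IsNoetherianRing R]
    (hur : AnalyticallyUnramified R) (hCM : IsCMLocalRing R)
    (hdim : ringKrullDim R = 2)
    (I J : Ideal R) (hI : IsMPrimary I) (hJ : IsMPrimary J) :
    idealHeight (Ideal.span {(⟨mono (-1) 0 1, u1_mem I J⟩ : ↥(extReesBar I J))} ⊔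
        plusIdeal1 (extReesBar I J)) = 2 ∧
    idealHeight (Ideal.span {(⟨mono 0 (-1) 1, u2_mem I J⟩ : ↥(extReesBar I J))} ⊔
        plusIdeal2 (extReesBar I J)) = 2 := by
  refine ⟨height_fst_eq_two hCM hdim I J hI hJ, ?_⟩
  rw [← map_swapEquiv I J, idealHeight_map]
  exact height_fst_eq_two hCM hdim J I hJ hI
end

section
/- Let A ⊆ B be a ring extension and let C be the integral closure of A in B. Let z ∈ C be a nonzerodivisor in C such that z is a unit in B. Then the ideal zC of C is integrally closed (i.e. every element of C integral over zC lies in zC). -/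
/-- Lemma 2.4.  Let `A ⊆ B` be a ring extension and `C` the integral
closure of `A` in `B`.  Let `z ∈ C` be a nonzerodivisor in `C` which is a unit in `B`.
Then the ideal `zC` is integrally closed: every element of `C` integral over `zC`
lies in `zC`. -/
theorem span_singleton_integrallyClosed_of_isUnit
    {A B : Type*} [CommRing A] [CommRing B] [Algebra A B]
    (hinj : Function.Injective (algebraMap A B))
    (z : ↥(integralClosure A B))
    (hreg : z ∈ nonZeroDivisors ↥(integralClosure A B))
    (hunit : IsUnit (z : B)) :
    ∀ x : ↥(integralClosure A B),
      IsIntegralOverIdeal (Ideal.span {z}) x → x ∈ Ideal.span {z} := by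
  rintro x ⟨n, hn, c, hc, hx⟩
  have hd : ∀ i, ∃ d, c i = z ^ i * d := fun i => by
    have h := hc i
    rw [Ideal.span_singleton_pow, Ideal.mem_span_singleton] at h
    exact h
  choose d hd using hd
  obtain ⟨w, hw⟩ : ∃ w : B, (x : B) = z * w := by
    obtain ⟨u, hu⟩ := hunit
    exact ⟨↑u⁻¹ * x, by rw [← hu, Units.mul_inv_cancel_left]⟩
  have hxB := congrArg (algebraMap (integralClosure A B) B) hx
  simp only [map_add, map_sum, map_mul, map_pow, map_zero, hd] at hxB
  change (x : B) ^ n + ∑ i ∈ Finset.range n,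
    (z : B) ^ (i + 1) * (d (i + 1) : B) * (x : B) ^ (n - (i + 1)) = 0 at hxB
  -- Dividing the equation of `x` by `zⁿ` gives an equation of `w = x / z` over `C`.
  have hweq : w ^ n + ∑ i ∈ Finset.range n, (d (i + 1) : B) * w ^ (n - (i + 1)) = 0 := by
    apply (hunit.pow n).mul_left_cancel
    rw [mul_zero, ← hxB, hw, mul_add, mul_pow, Finset.mul_sum]
    congr 1
    refine Finset.sum_congr rfl fun i hi => ?_
    have hi' : n = (i + 1) + (n - (i + 1)) := by
      have := Finset.mem_range.mp hi
      omega
    rw [mul_pow]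
    nth_rewrite 1 [hi']
    rw [pow_add]
    ring
  have hwC : IsIntegral (integralClosure A B) w := by
    refine ⟨Polynomial.X ^ n + ∑ i ∈ Finset.range n,
      Polynomial.C (d (i + 1)) * Polynomial.X ^ (n - (i + 1)), ?_, ?_⟩
    · apply Polynomial.monic_X_pow_add
      refine (Polynomial.degree_sum_le _ _).trans_lt ?_
      refine (Finset.sup_lt_iff (WithBot.bot_lt_coe n)).mpr ?_
      intro i hi
      refine (Polynomial.degree_C_mul_X_pow_le _ _).trans_lt ?_
      exact WithBot.coe_lt_coe.mpr (Nat.sub_lt hn (Nat.succ_pos i))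
    · simp only [Polynomial.eval₂_add, Polynomial.eval₂_finsetSum, Polynomial.eval₂_mul,
        Polynomial.eval₂_pow, Polynomial.eval₂_X, Polynomial.eval₂_C]
      exact hweq
  have hwA : IsIntegral A w := isIntegral_trans w hwC
  exact Ideal.mem_span_singleton.mpr ⟨⟨w, hwA⟩, Subtype.ext hw⟩
end

section
/- Let (R,𝔪) be an analytically unramified Cohen–Macaulay local ring of dimension 2 with infinite residue field, I, J 𝔪-primary ideals, and let a ∈ I∖I², b ∈ J∖J² be nonzerodivisors such that (a) ∩ I^r J^s‾ = a·(I^{r-1} J^s‾) for all r ≫ 0 and all integers s, and (b) ∩ I^r J^s‾ = b·(I^r J^{s-1}‾) for all integers r and all s ≫ 0. Then (a) ∩ I^r J^s‾ = a·(I^{r-1} J^s‾) for ALL r > 0 and all integers s, and (b) ∩ I^r J^s‾ = b·(I^r J^{s-1}‾) for all integers r and ALL s > 0. -/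
/-- The determinant trick: `x N ⊆ L N` for a finitely generated ideal `N` containing a
nonzerodivisor makes `x` integral over `L`. -/
theorem isIntegralOverIdeal_of_mul_le {R : Type*} [CommRing R] [IsNoetherianRing R]
    (L N : Ideal R) (x d : R) (hd : d ∈ nonZeroDivisors R) (hdN : d ∈ N)
    (h : Ideal.span {x} * N ≤ L * N) : IsIntegralOverIdeal L x := by
  have hrange : LinearMap.range (LinearMap.lsmul R N x) ≤ L • (⊤ : Submodule R N) := by
    rintro _ ⟨y, rfl⟩
    have hy : x * (y : R) ∈ L * N :=
      h (Ideal.mul_mem_mul (Ideal.mem_span_singleton_self x) y.2)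
    have hmap : (L • (⊤ : Submodule R N)).map N.subtype = L * N := by
      rw [Submodule.map_smul'', Submodule.map_top, Submodule.range_subtype, smul_eq_mul]
    rw [← hmap] at hy
    obtain ⟨z, hz, hzy⟩ := hy
    have : z = LinearMap.lsmul R N x y := by
      apply Subtype.ext
      simpa using hzy
    exact this ▸ hz
  obtain ⟨p, hp, -, hcoeff, hzero⟩ :=
    LinearMap.exists_monic_and_natDegree_eq_and_coeff_mem_pow_and_aeval_eq_zero
      R (LinearMap.lsmul R N x) L hrange
  have haeval : Polynomial.aeval (LinearMap.lsmul R N x) p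
      = LinearMap.lsmul R N (p.eval x) := by
    have := Polynomial.aeval_algHom_apply (Algebra.lsmul R R N : R →ₐ[R] Module.End R N) x p
    rw [Polynomial.coe_aeval_eq_eval] at this
    exact this
  -- The equation holds on `N`, hence at the nonzerodivisor `d`, hence in `R`.
  have heval : p.eval x = 0 := by
    have h1 := congrArg (fun f : Module.End R N => ((f ⟨d, hdN⟩ : N) : R)) (haeval.symm.trans hzero)
    simp only [LinearMap.lsmul_apply, Submodule.coe_smul, smul_eq_mul, LinearMap.zero_apply,
      ZeroMemClass.coe_zero] at h1
    exact (mul_right_mem_nonZeroDivisors_eq_zero_iff hd).1 h1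
  -- Multiplying by `X` makes the degree positive, as the definition demands.
  refine ⟨p.natDegree + 1, Nat.succ_pos _,
    fun i => if i ≤ p.natDegree then p.coeff (p.natDegree - i) else 0, fun i => ?_, ?_⟩
  · dsimp only
    split_ifs with hi
    · have := hcoeff (p.natDegree - i)
      rwa [Nat.sub_sub_self hi] at this
    · exact zero_mem _
  · have hs : p.eval x * x = 0 := by rw [heval, zero_mul]
    rw [Polynomial.eval_eq_sum_range, ← Finset.sum_range_reflect, Finset.sum_range_succ',
      add_mul] at hs
    rw [Finset.sum_range_succ]
    simp only [Nat.add_sub_cancel, Nat.sub_zero, hp.coeff_natDegree, one_mul] at hs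
    rw [Finset.sum_mul, add_comm, ← pow_succ] at hs
    beta_reduce
    rw [if_neg (by omega), zero_mul, add_zero, ← hs]
    congr 1
    refine Finset.sum_congr rfl fun i hi => ?_
    have hi' := Finset.mem_range.1 hi
    rw [if_pos (by omega), show p.natDegree + 1 - (i + 1) = (p.natDegree - (i + 1)) + 1 by omega,
      pow_succ, ← mul_assoc]

theorem sup_pow_le {R : Type*} [CommRing R] (A B : Ideal R) (n : ℕ) :
    (A ⊔ B) ^ (n + 1) ≤ A * (A ⊔ B) ^ n ⊔ B ^ (n + 1) := by
  induction n with
  | zero => simp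
  | succ n ih =>
    rw [pow_succ' (A ⊔ B) (n + 1), Ideal.sup_mul]
    refine sup_le le_sup_left ((Ideal.mul_mono_right ih).trans ?_)
    rw [Ideal.mul_sup, ← pow_succ' B]
    refine sup_le_sup_right ?_ _
    calc B * (A * (A ⊔ B) ^ n) = A * (B * (A ⊔ B) ^ n) := by rw [mul_left_comm]
      _ ≤ A * ((A ⊔ B) * (A ⊔ B) ^ n) := by gcongr; exact le_sup_right
      _ = A * (A ⊔ B) ^ (n + 1) := by rw [pow_succ']

/-- For `x` integral over `A` of degree `n`, the ideal `(A + (x))^(n-1)` absorbs `x` into `A`. -/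
theorem exists_span_mul_le {R : Type*} [CommRing R] (A : Ideal R) (x d : R)
    (hd : d ∈ nonZeroDivisors R) (hdA : d ∈ A) (hx : IsIntegralOverIdeal A x) :
    ∃ N : Ideal R, (∃ e ∈ nonZeroDivisors R, e ∈ N) ∧ Ideal.span {x} * N ≤ A * N := by
  obtain ⟨n, hn, c, hc, heq⟩ := hx
  obtain ⟨m, rfl⟩ := Nat.exists_eq_succ_of_ne_zero hn.ne'
  refine ⟨(A ⊔ Ideal.span {x}) ^ m, ⟨d ^ m, pow_mem hd m,
    Ideal.pow_mem_pow (Ideal.mem_sup_left hdA) m⟩, ?_⟩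
  calc Ideal.span {x} * (A ⊔ Ideal.span {x}) ^ m
      ≤ (A ⊔ Ideal.span {x}) * (A ⊔ Ideal.span {x}) ^ m := by gcongr; exact le_sup_right
    _ = (A ⊔ Ideal.span {x}) ^ (m + 1) := by rw [pow_succ']
    _ ≤ A * (A ⊔ Ideal.span {x}) ^ m ⊔ Ideal.span {x} ^ (m + 1) := sup_pow_le _ _ _
    _ ≤ _ := sup_le le_rfl ?_
  rw [Ideal.span_singleton_pow, Ideal.span_singleton_le_iff_mem, eq_neg_of_add_eq_zero_left heq]
  refine neg_mem (sum_mem fun i hi => ?_)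
  have hi' := Finset.mem_range.1 hi
  have h1 : A ^ (i + 1) * Ideal.span {x} ^ (m + 1 - (i + 1)) ≤ A * (A ⊔ Ideal.span {x}) ^ m := by
    calc A ^ (i + 1) * Ideal.span {x} ^ (m + 1 - (i + 1))
        = A * (A ^ i * Ideal.span {x} ^ (m - i)) := by
          rw [pow_succ', mul_assoc, Nat.add_sub_add_right]
      _ ≤ A * ((A ⊔ Ideal.span {x}) ^ i * (A ⊔ Ideal.span {x}) ^ (m - i)) := by
          gcongr
          · exact le_sup_left
          · exact le_sup_right
      _ = A * (A ⊔ Ideal.span {x}) ^ m := by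
          rw [← pow_add, Nat.add_sub_cancel' (by omega)]
  exact h1 (Ideal.mul_mem_mul (hc _) (Ideal.pow_mem_pow (Ideal.mem_span_singleton_self x) _))

/-- An ideal `N` absorbing all of `A‾` into `A`: the product of the ideals absorbing the finitely
many integral elements that generate `A‾`. -/
theorem exists_intCl_mul_le {R : Type*} [CommRing R] [IsNoetherianRing R] (A : Ideal R) (d : R)
    (hd : d ∈ nonZeroDivisors R) (hdA : d ∈ A) :
    ∃ N : Ideal R, (∃ e ∈ nonZeroDivisors R, e ∈ N) ∧ intCl A * N ≤ A * N := by
  classical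
  obtain ⟨t, hts, ht⟩ := (Submodule.fg_span_iff_fg_span_finset_subset
    {x | IsIntegralOverIdeal A x}).1 (IsNoetherian.noetherian (intCl A))
  have key : ∀ t : Finset R, (t : Set R) ⊆ {x | IsIntegralOverIdeal A x} →
      ∃ N : Ideal R, (∃ e ∈ nonZeroDivisors R, e ∈ N) ∧
        Ideal.span (t : Set R) * N ≤ A * N := by
    intro t
    induction t using Finset.induction_on with
    | empty => exact fun _ => ⟨⊤, ⟨1, one_mem _, trivial⟩, by simp⟩
    | insert x t _ ih =>
      intro h
      rw [Finset.coe_insert, Set.insert_subset_iff] at h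
      obtain ⟨N₁, ⟨e₁, he₁, heN₁⟩, h₁⟩ := exists_span_mul_le A x d hd hdA h.1
      obtain ⟨N₂, ⟨e₂, he₂, heN₂⟩, h₂⟩ := ih h.2
      refine ⟨N₁ * N₂, ⟨e₁ * e₂, mul_mem he₁ he₂, Ideal.mul_mem_mul heN₁ heN₂⟩, ?_⟩
      rw [Finset.coe_insert, Ideal.span_insert, Ideal.sup_mul]
      refine sup_le ?_ ?_
      · rw [← mul_assoc, ← mul_assoc]
        exact Ideal.mul_mono_left h₁
      · rw [mul_left_comm, mul_left_comm A]
        exact Ideal.mul_mono_right h₂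
  obtain ⟨N, hN, hle⟩ := key t hts
  refine ⟨N, hN, ?_⟩
  rw [show intCl A = Ideal.span (t : Set R) from ht]
  exact hle

theorem intCl_cancel {R : Type*} [CommRing R] [IsNoetherianRing R] (K L : Ideal R) (k l x : R)
    (hk : k ∈ nonZeroDivisors R) (hkK : k ∈ K) (hl : l ∈ nonZeroDivisors R) (hlL : l ∈ L)
    (h : Ideal.span {x} * K ≤ intCl (K * L)) : x ∈ intCl L := by
  obtain ⟨N, ⟨e, he, heN⟩, hN⟩ :=
    exists_intCl_mul_le (K * L) (k * l) (mul_mem hk hl) (Ideal.mul_mem_mul hkK hlL)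
  refine Ideal.subset_span (isIntegralOverIdeal_of_mul_le L (K * N) x (k * e) (mul_mem hk he)
    (Ideal.mul_mem_mul hkK heN) ?_)
  calc Ideal.span {x} * (K * N) = Ideal.span {x} * K * N := by rw [mul_assoc]
    _ ≤ intCl (K * L) * N := Ideal.mul_mono_left h
    _ ≤ K * L * N := hN
    _ = L * (K * N) := by rw [mul_comm K L, mul_assoc]

theorem mul_mem_intCl {R : Type*} [CommRing R] (K L : Ideal R) (a x : R) (ha : a ∈ K)
    (hx : x ∈ intCl L) : a * x ∈ intCl (K * L) := by
  have hle : intCl L ≤ Submodule.comap (LinearMap.mulLeft R a) (intCl (K * L)) := by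
    refine Ideal.span_le.2 fun y hy => ?_
    obtain ⟨n, hn, c, hc, heq⟩ := hy
    refine Ideal.subset_span ⟨n, hn, fun i => a ^ i * c i, fun i => ?_, ?_⟩
    · rw [mul_pow]
      exact Ideal.mul_mem_mul (Ideal.pow_mem_pow ha i) (hc i)
    · have := congrArg (fun z => a ^ n * z) heq
      simp only [mul_zero, mul_add, Finset.mul_sum] at this
      rw [LinearMap.mulLeft_apply, mul_pow, ← this]
      congr 1
      refine Finset.sum_congr rfl fun i hi => ?_
      have hi' := Finset.mem_range.1 hi
      conv_rhs => rw [show n = (i + 1) + (n - (i + 1)) by omega, pow_add]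
      rw [show i + 1 + (n - (i + 1)) - (i + 1) = n - (i + 1) by omega]
      ring
  exact hle hx

/-- If intersecting with `(a)` behaves well after multiplication by `I^n`, it does so already
before. -/
theorem span_inf_intCl_eq {R : Type*} [CommRing R] [IsNoetherianRing R] (I L : Ideal R) (a l : R)
    (haI : a ∈ I) (ha : a ∈ nonZeroDivisors R) (hl : l ∈ nonZeroDivisors R) (hlL : l ∈ L) (n : ℕ)
    (h : Ideal.span {a} ⊓ intCl (I ^ n * (I * L)) ≤ Ideal.span {a} * intCl (I ^ n * L)) :
    Ideal.span {a} ⊓ intCl (I * L) = Ideal.span {a} * intCl L := by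
  apply le_antisymm
  · rintro _ ⟨hz, hz'⟩
    obtain ⟨x, rfl⟩ := Ideal.mem_span_singleton'.1 hz
    rw [mul_comm x a] at hz' ⊢
    refine Ideal.mul_mem_mul (Ideal.mem_span_singleton_self a) ?_
    refine intCl_cancel (I ^ n) L (a ^ n) l x (pow_mem ha n) (Ideal.pow_mem_pow haI n) hl hlL ?_
    rw [Ideal.span_singleton_mul_le_iff]
    intro y hy
    have h1 : a * (x * y) ∈ intCl (I ^ n * (I * L)) := by
      rw [show a * (x * y) = y * (a * x) by ring]
      exact mul_mem_intCl _ _ _ _ hy hz'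
    obtain ⟨w, hw, hwe⟩ := Ideal.mem_span_singleton_mul.1
      (h ⟨Ideal.mul_mem_right _ _ (Ideal.mem_span_singleton_self a), h1⟩)
    rwa [← (mul_cancel_left_mem_nonZeroDivisors ha).1 hwe]
  · rw [Ideal.span_singleton_mul_le_iff]
    intro x hx
    exact ⟨Ideal.mul_mem_right _ _ (Ideal.mem_span_singleton_self a), mul_mem_intCl _ _ _ _ haI hx⟩

theorem IJ_add_left {R : Type*} [CommRing R] (I J : Ideal R) (r s : ℤ) (n : ℕ) (hr : 0 ≤ r) :
    IJ I J (r + n) s = I ^ n * IJ I J r s := by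
  rw [IJ, IJ, ← mul_assoc, ← pow_add]
  congr 2
  omega

theorem IJ_comm {R : Type*} [CommRing R] (I J : Ideal R) (r s : ℤ) :
    IJ I J r s = IJ J I s r :=
  mul_comm _ _

theorem span_inf_IJbar_eq {R : Type*} [CommRing R] [IsNoetherianRing R] (I J : Ideal R) (a b : R)
    (haI : a ∈ I) (hbJ : b ∈ J) (ha : a ∈ nonZeroDivisors R) (hb : b ∈ nonZeroDivisors R)
    (h : ∃ N : ℤ, ∀ r : ℤ, N ≤ r → ∀ s : ℤ,
      Ideal.span {a} ⊓ IJbar I J r s = Ideal.span {a} * IJbar I J (r - 1) s)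
    (r : ℤ) (hr : 0 < r) (s : ℤ) :
    Ideal.span {a} ⊓ IJbar I J r s = Ideal.span {a} * IJbar I J (r - 1) s := by
  obtain ⟨N, hN⟩ := h
  have hstep : IJ I J r s = I * IJ I J (r - 1) s := by
    have := IJ_add_left I J (r - 1) s 1 (by omega)
    rwa [pow_one, Nat.cast_one, sub_add_cancel] at this
  have hlarge := hN (r + (N - r).toNat) (by omega) s
  rw [show r + ((N - r).toNat : ℤ) - 1 = (r - 1) + ((N - r).toNat : ℤ) by ring] at hlarge
  simp only [IJbar] at hlarge ⊢
  rw [IJ_add_left I J r s _ hr.le, IJ_add_left I J (r - 1) s _ (by omega), hstep] at hlarge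
  rw [hstep]
  exact span_inf_intCl_eq I (IJ I J (r - 1) s) a (a ^ (r - 1).toNat * b ^ s.toNat) haI ha
    (mul_mem (pow_mem ha _) (pow_mem hb _))
    (Ideal.mul_mem_mul (Ideal.pow_mem_pow haI _) (Ideal.pow_mem_pow hbJ _)) _ hlarge.le

/-- Lemma 2.7.  Let `(R,𝔪)` be an analytically unramified
Cohen-Macaulay local ring of dimension `2` with infinite residue field, `I, J`
`𝔪`-primary ideals and `a ∈ I∖I²`, `b ∈ J∖J²` nonzerodivisors such that
`(a) ∩ \overline{I^r J^s} = a\overline{I^{r-1} J^s}` for `r ≫ 0` and all `s`, and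
`(b) ∩ \overline{I^r J^s} = b\overline{I^r J^{s-1}}` for all `r` and `s ≫ 0`.
Then these equalities hold for all `r > 0` (resp. all `s > 0`). -/
theorem good_joint_reduction_stability
    (R : Type*) [CommRing R] [IsLocalRing R] [IsNoetherianRing R]
    (hur : AnalyticallyUnramified R) (hCM : IsCMLocalRing R)
    (hdim : ringKrullDim R = 2) (hres : Infinite (IsLocalRing.ResidueField R))
    (I J : Ideal R) (hI : IsMPrimary I) (hJ : IsMPrimary J)
    (a b : R) (haI : a ∈ I) (haI2 : a ∉ I ^ 2) (hbJ : b ∈ J) (hbJ2 : b ∉ J ^ 2)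
    (hareg : a ∈ nonZeroDivisors R) (hbreg : b ∈ nonZeroDivisors R)
    (ha : ∃ N : ℤ, ∀ r : ℤ, N ≤ r → ∀ s : ℤ,
      Ideal.span {a} ⊓ IJbar I J r s = Ideal.span {a} * IJbar I J (r - 1) s)
    (hb : ∃ N : ℤ, ∀ s : ℤ, N ≤ s → ∀ r : ℤ,
      Ideal.span {b} ⊓ IJbar I J r s = Ideal.span {b} * IJbar I J r (s - 1)) :
    (∀ r : ℤ, 0 < r → ∀ s : ℤ,
      Ideal.span {a} ⊓ IJbar I J r s = Ideal.span {a} * IJbar I J (r - 1) s) ∧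
    (∀ s : ℤ, 0 < s → ∀ r : ℤ,
      Ideal.span {b} ⊓ IJbar I J r s = Ideal.span {b} * IJbar I J r (s - 1)) := by
  refine ⟨span_inf_IJbar_eq I J a b haI hbJ hareg hbreg ha, fun s hs r => ?_⟩
  simp only [IJbar, IJ_comm I J] at hb ⊢
  exact span_inf_IJbar_eq J I b a hbJ haI hbreg hareg hb s hs r
end
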